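/- arXiv:math/0010276 — 4 statements merged into one kernel-verified Lean document; each statement's English description precedes it below -/
import Mathlib

section
/- Let E be a vector bundle on P^n (n ≥ 2) all of whose intermediate cohomology modules H^i_*(P^n, E) vanish for 1 ≤ i ≤ n−1. Then E is a direct sum of line bundles (Horrocks' theorem). -/
open MvPolynomial CategoryTheory

/-!
Vanishing of the local cohomology of `M` in degrees below the number of variables means that every
class in `Extⁱ(R / m ^ t, M)` dies in `Extⁱ(R / m ^ t', M)` for some larger `t'`. Away from the
origin `M` is flat, so there the variables act as a regular sequence; an element witnessing a
failure of regularity is therefore killed by a power of `m`, and the case `i = 0` makes it zero.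
Dividing by one variable at a time, one finds that the variables form a regular sequence on `M`. As
they generate the maximal ideal at the origin, `M` is free there too, hence projective.

Projective modules over a polynomial ring are free by the theorem of Quillen and Suslin, shown here
for idempotent matrices by induction on the number of variables. Over `k(T)[σ]` an idempotent splits
by induction, so over `k[σ][T]` it splits once a monic polynomial in `T` is inverted. Locally on
`k[σ]` no monic polynomial has to be inverted, by Horrocks' theorem on projective modules over
`A[T]` with `A` local, and by Quillen's patching the idempotent is then conjugate to its value at
`T = 0`, which splits by induction.
-/

/-! ### Horrocks' theorem over a local ring -/

section MonicFamilies

open IsLocalRing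
open scoped Polynomial

theorem mem_ideal_smul_top_pi_iff {R ι : Type*} [CommRing R] [Finite ι] {J : Ideal R} {v : ι → R} :
    v ∈ J • (⊤ : Submodule R (ι → R)) ↔ ∀ i, v i ∈ J := by
  classical
  have := Fintype.ofFinite ι
  refine ⟨fun h i => ?_, fun h => ?_⟩
  · exact Submodule.smul_induction_on (p := fun v => v i ∈ J) h
      (fun a ha v _ => J.mul_mem_right (v i) ha) fun _ _ => J.add_mem
  · rw [← Finset.univ_sum_single v]
    refine Submodule.sum_mem _ fun i _ => ?_
    rw [← mul_one (v i), ← smul_eq_mul, Pi.single_smul]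
    exact Submodule.smul_mem_smul (h i) trivial

/-- Modularity gives `P = P' ⊕ (E ∩ P)`, and Nakayama's lemma kills the second summand. -/
theorem eq_of_isCompl_of_inf_le_smul {R M : Type*} [CommRing R] [IsNoetherianRing R]
    [AddCommGroup M] [Module R M] {I : Ideal R} (hI : I ≤ (⊥ : Ideal R).jacobson)
    {E P P' : Submodule R M} (hE : E.FG) (hc : IsCompl E P') (hle : P' ≤ P)
    (h : E ⊓ P ≤ I • P) : P' = P := by
  have hP : P = P' ⊔ E ⊓ P := by
    rw [← sup_inf_assoc_of_le E hle, sup_comm, hc.sup_eq_top, top_inf_eq]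
  have hQ : E ⊓ P = ⊥ := by
    refine Submodule.eq_bot_of_le_smul_of_le_jacobson_bot I _ (hE.of_le inf_le_left) ?_ hI
    calc E ⊓ P ≤ E ⊓ (I • (E ⊓ P) ⊔ P') := le_inf inf_le_left <| by
          refine h.trans ?_
          conv_lhs => rw [hP, Submodule.smul_sup, sup_comm]
          exact sup_le_sup_left Submodule.smul_le_right _
      _ = I • (E ⊓ P) := by
          rw [inf_comm, sup_inf_assoc_of_le _ (Submodule.smul_le_right.trans inf_le_left),
            inf_comm P', hc.inf_eq_bot, sup_bot_eq]
  rw [hP, hQ, sup_bot_eq]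

variable {A ι : Type*} [CommRing A]

theorem coeff_mem_of_mem_smul_top [Finite ι] {I : Ideal A} {v : ι → A[X]}
    (hv : v ∈ I • (⊤ : Submodule A (ι → A[X]))) (i : ι) (j : ℕ) : (v i).coeff j ∈ I := by
  rw [← Submodule.restrictScalars_top A A[X], ← Ideal.smul_restrictScalars,
    Submodule.restrictScalars_mem, mem_ideal_smul_top_pi_iff] at hv
  exact Ideal.mem_map_C_iff.1 (hv i) j

/-- The vectors of polynomials whose `i`-th entry has degree less than `d i`. -/
noncomputable def degreeBox (A : Type*) [CommRing A] (d : ι → ℕ) : Submodule A (ι → A[X]) :=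
  Submodule.pi Set.univ fun i => A[X]_(d i)

theorem mem_degreeBox {d : ι → ℕ} {v : ι → A[X]} :
    v ∈ degreeBox A d ↔ ∀ i j, d i ≤ j → (v i).coeff j = 0 := by
  simp [degreeBox, Submodule.mem_pi, Polynomial.mem_degreeLT, Polynomial.degree_lt_iff_coeff_zero]

theorem single_mem_degreeBox [DecidableEq ι] {d : ι → ℕ} {i : ι} {p : A[X]} :
    Pi.single i p ∈ degreeBox A d ↔ ∀ j, d i ≤ j → p.coeff j = 0 := by
  refine mem_degreeBox.trans ⟨fun h j hj => by simpa using h i j hj, fun h l j hj => ?_⟩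
  rcases eq_or_ne l i with rfl | hl
  · simpa using h j hj
  · simp [hl]

theorem degreeBox_zero : degreeBox A (0 : ι → ℕ) = ⊥ :=
  (Submodule.eq_bot_iff _).2 fun v hv => funext fun i => Polynomial.ext fun j => by
    simpa using mem_degreeBox.1 hv i j (Nat.zero_le j)

theorem fg_degreeBox [Finite ι] (d : ι → ℕ) : (degreeBox A d).FG := by
  classical exact Submodule.fg_pi fun i => ⟨_, Polynomial.degreeLT_eq_span_X_pow.symm⟩

variable [DecidableEq ι]

/-- A family of vectors of polynomials is monic of multidegree `d` if its matrix is `X ^ d i` on the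
diagonal up to terms of degree less than `d i` throughout the `i`-th coordinate. Division with
remainder by such a family is possible. -/
def IsMonicFamily (d : ι → ℕ) (W : ι → ι → A[X]) : Prop :=
  ∀ i, Pi.single i (Polynomial.X ^ d i) - W i ∈ degreeBox A d

theorem exists_isMonicFamily_mem {d : ι → ℕ} {P : Submodule A[X] (ι → A[X])}
    (h : ∀ i, Pi.single i (Polynomial.X ^ d i) ∈ degreeBox A d ⊔ P.restrictScalars A) :
    ∃ W, IsMonicFamily d W ∧ ∀ i, W i ∈ P := by
  choose w hw W hW hsum using fun i => Submodule.mem_sup.1 (h i)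
  exact ⟨W, fun i => by rw [← hsum, add_sub_cancel_right]; exact hw i, hW⟩

namespace IsMonicFamily

variable {d : ι → ℕ} {W : ι → ι → A[X]}

theorem coeff_sum_smul [Fintype ι] (hW : IsMonicFamily d W) {c : ι → A[X]} {n : ℕ}
    (hc : ∀ i, (c i).natDegree ≤ n) (i : ι) :
    ((∑ l, c l • W l) i).coeff (d i + n) = (c i).coeff n := by
  have hsplit : (∑ l, c l • W l) i = c i * Polynomial.X ^ d i -
      ∑ l, c l * ((Pi.single l (Polynomial.X ^ d l) : ι → A[X]) - W l) i := by
    simp [mul_sub, Finset.sum_sub_distrib, Pi.single_apply]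
  rw [hsplit, Polynomial.coeff_sub, Polynomial.finsetSum_coeff, Finset.sum_eq_zero, sub_zero,
    add_comm, Polynomial.coeff_mul_X_pow]
  intro l _
  rw [Polynomial.coeff_mul]
  refine Finset.sum_eq_zero fun x hx => ?_
  rw [Finset.HasAntidiagonal.mem_antidiagonal] at hx
  rcases lt_or_ge n x.1 with hlt | hge
  · rw [Polynomial.coeff_eq_zero_of_natDegree_lt ((hc l).trans_lt hlt), zero_mul]
  · rw [mem_degreeBox.1 (hW l) i _ (by lia), mul_zero]

theorem degreeBox_add_le [Finite ι] (hW : IsMonicFamily d W) (n : ℕ) :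
    degreeBox A (fun i => d i + n) ≤
      degreeBox A d ⊔ (Submodule.span A[X] (Set.range W)).restrictScalars A := by
  have := Fintype.ofFinite ι
  induction n with
  | zero => exact le_sup_left
  | succ n ih =>
    intro v hv
    let c : ι → A[X] := fun i => Polynomial.monomial n ((v i).coeff (d i + n))
    have hmem : ∑ i, c i • W i ∈ Submodule.span A[X] (Set.range W) :=
      Submodule.sum_smul_mem _ _ fun i _ => Submodule.subset_span ⟨i, rfl⟩
    rw [← sub_add_cancel v (∑ i, c i • W i)]
    refine add_mem (ih (mem_degreeBox.2 fun i j hj => ?_)) (Submodule.mem_sup_right hmem)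
    obtain ⟨j, rfl⟩ := Nat.exists_eq_add_of_le hj
    have hc := hW.coeff_sum_smul (c := c) (n := n + j)
      (fun l => (Polynomial.natDegree_monomial_le _).trans (Nat.le_add_right n j)) i
    rw [Pi.sub_apply, Polynomial.coeff_sub, add_assoc, hc, Polynomial.coeff_monomial]
    rcases j.eq_zero_or_pos with rfl | hj
    · simp
    · rw [mem_degreeBox.1 hv i _ (by lia), if_neg (by lia), sub_zero]

theorem sum_smul_mem_degreeBox_iff [Fintype ι] (hW : IsMonicFamily d W) {c : ι → A[X]} :
    ∑ i, c i • W i ∈ degreeBox A d ↔ c = 0 := by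
  refine ⟨fun hc => ?_, by rintro rfl; simp⟩
  cases isEmpty_or_nonempty ι
  · exact Subsingleton.elim _ _
  obtain ⟨i, hi⟩ := Finite.exists_max fun l => (c l).natDegree
  have hcoeff : ∀ l, (c l).coeff (c i).natDegree = 0 := fun l => by
    rw [← hW.coeff_sum_smul hi l, mem_degreeBox.1 hc l _ (Nat.le_add_right _ _)]
  have hdeg : (c i).natDegree = 0 := by
    rw [Polynomial.leadingCoeff_eq_zero.1 (hcoeff i), Polynomial.natDegree_zero]
  rw [hdeg] at hi hcoeff
  funext l
  rw [Polynomial.eq_C_of_natDegree_le_zero (hi l), hcoeff l, map_zero, Pi.zero_apply]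

theorem isCompl_degreeBox_span [Finite ι] (hW : IsMonicFamily d W) :
    IsCompl (degreeBox A d) ((Submodule.span A[X] (Set.range W)).restrictScalars A) := by
  have := Fintype.ofFinite ι
  refine ⟨Submodule.disjoint_def.2 fun v hv hv' => ?_, codisjoint_iff_le_sup.2 fun v _ => ?_⟩
  · obtain ⟨c, rfl⟩ := (Submodule.mem_span_range_iff_exists_fun A[X]).1 hv'
    simp [hW.sum_smul_mem_degreeBox_iff.1 hv]
  · refine hW.degreeBox_add_le (Finset.univ.sup fun i => (v i).natDegree + 1)
      (mem_degreeBox.2 fun i j hj => Polynomial.coeff_eq_zero_of_natDegree_lt ?_)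
    have := Finset.le_sup (f := fun i => (v i).natDegree + 1) (Finset.mem_univ i)
    lia

theorem linearIndependent [Finite ι] (hW : IsMonicFamily d W) : LinearIndependent A[X] W :=
  have := Fintype.ofFinite ι
  Fintype.linearIndependent_iff.2 fun _ hc =>
    congrFun (hW.sum_smul_mem_degreeBox_iff.1 (hc ▸ zero_mem _))

end IsMonicFamily

theorem degreeBox_sup_restrictScalars_eq_top [Finite ι] {d : ι → ℕ} {P : Submodule A[X] (ι → A[X])}
    (h : ∀ i, Pi.single i (Polynomial.X ^ d i) ∈ degreeBox A d ⊔ P.restrictScalars A) :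
    degreeBox A d ⊔ P.restrictScalars A = ⊤ := by
  obtain ⟨W, hW, hWP⟩ := exists_isMonicFamily_mem h
  have hle : Submodule.span A[X] (Set.range W) ≤ P :=
    Submodule.span_le.2 (Set.range_subset_iff.2 hWP)
  exact eq_top_mono (sup_le_sup le_rfl fun _ hv => hle hv) hW.isCompl_degreeBox_span.sup_eq_top

theorem exists_degreeBox_sup_restrictScalars_eq_top [Finite ι] {P : Submodule A[X] (ι → A[X])}
    {f : A[X]} (hf : f.Monic) (hfP : ∀ i, Pi.single i f ∈ P) :
    ∃ d : ι → ℕ, degreeBox A d ⊔ P.restrictScalars A = ⊤ := by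
  refine ⟨fun _ => f.natDegree, degreeBox_sup_restrictScalars_eq_top fun i => ?_⟩
  rw [← sub_add_cancel (Polynomial.X ^ f.natDegree) f, Pi.single_add]
  refine Submodule.add_mem_sup (single_mem_degreeBox.2 fun j hj => ?_) (hfP i)
  rcases hj.eq_or_lt with rfl | hlt
  · simp [hf.coeff_natDegree]
  · simp [Polynomial.coeff_X_pow, hlt.ne', Polynomial.coeff_eq_zero_of_natDegree_lt hlt]

section LocalRing

variable [IsLocalRing A]

theorem single_X_pow_mem_sup {d : ι → ℕ} {N : Submodule A (ι → A[X])}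
    (hN : maximalIdeal A • ⊤ ≤ N) (hd : degreeBox A d ⊓ N ≤ maximalIdeal A • ⊤) {i : ι}
    (hi : ¬ degreeBox A (d + Pi.single i 1) ⊓ N ≤ maximalIdeal A • ⊤) :
    Pi.single i (Polynomial.X ^ d i) ∈ degreeBox A d ⊔ N := by
  obtain ⟨v, ⟨hv, hvN⟩, hvm⟩ := SetLike.not_le_iff_exists.1 hi
  let a := (v i).coeff (d i)
  let x : ι → A[X] := Pi.single i (Polynomial.X ^ d i)
  have hsub : v - a • x ∈ degreeBox A d := by
    refine mem_degreeBox.2 fun l j hj => ?_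
    rcases eq_or_ne l i with rfl | hl
    · rcases hj.eq_or_lt with rfl | hlt
      · simp [a, x]
      · simpa [x, Polynomial.coeff_X_pow, hlt.ne'] using mem_degreeBox.1 hv l j (by simp; lia)
    · simpa [x, hl] using mem_degreeBox.1 hv l j (by simpa [hl] using hj)
  have ha : IsUnit a := by
    by_contra ha
    have hax : a • x ∈ maximalIdeal A • (⊤ : Submodule A (ι → A[X])) :=
      Submodule.smul_mem_smul ((mem_maximalIdeal a).2 ha) trivial
    exact hvm (sub_add_cancel v (a • x) ▸ add_mem (hd ⟨hsub, sub_mem hvN (hN hax)⟩) hax)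
  refine (Submodule.smul_mem_iff_of_isUnit _ ha).1 ?_
  rw [← sub_sub_cancel v (a • x)]
  exact sub_mem (Submodule.mem_sup_right hvN) (Submodule.mem_sup_left hsub)

variable [Finite ι]

theorem le_natDegree_of_degreeBox_inf_le {d : ι → ℕ} {N : Submodule A (ι → A[X])}
    (hd : degreeBox A d ⊓ N ≤ maximalIdeal A • ⊤) {f : A[X]} (hf : f.Monic) {i : ι}
    (hfN : Pi.single i f ∈ N) : d i ≤ f.natDegree := by
  by_contra! hlt
  have hmem : Pi.single i f ∈ maximalIdeal A • (⊤ : Submodule A (ι → A[X])) :=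
    hd ⟨single_mem_degreeBox.2 fun j hj =>
      Polynomial.coeff_eq_zero_of_natDegree_lt (hlt.trans_le hj), hfN⟩
  have hlead := coeff_mem_of_mem_smul_top hmem i f.natDegree
  rw [Pi.single_eq_same, hf.coeff_natDegree] at hlead
  exact (mem_maximalIdeal 1).1 hlead isUnit_one

/-- A maximal `d` with the first property has the second one. -/
theorem exists_degreeBox_inf_le_and_single_mem_sup {N : Submodule A (ι → A[X])}
    (hN : maximalIdeal A • ⊤ ≤ N) {f : A[X]} (hf : f.Monic) (hfN : ∀ i, Pi.single i f ∈ N) :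
    ∃ d : ι → ℕ, degreeBox A d ⊓ N ≤ maximalIdeal A • ⊤ ∧
      ∀ i, Pi.single i (Polynomial.X ^ d i) ∈ degreeBox A d ⊔ N := by
  have := Fintype.ofFinite ι
  have hfin : {d : ι → ℕ | degreeBox A d ⊓ N ≤ maximalIdeal A • ⊤}.Finite :=
    (Set.finite_Iic fun _ : ι => f.natDegree).subset fun d hd i =>
      le_natDegree_of_degreeBox_inf_le hd hf (hfN i)
  obtain ⟨d, hd⟩ := hfin.exists_maximal ⟨0, by simp [degreeBox_zero]⟩
  refine ⟨d, hd.prop, fun i => single_X_pow_mem_sup hN hd.prop fun h => ?_⟩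
  have := hd.le_of_ge h le_self_add i
  simp at this

theorem degreeBox_sup_eq_top_of_mod_maximalIdeal {d e : ι → ℕ} {P : Submodule A[X] (ι → A[X])}
    (he : degreeBox A e ⊔ P.restrictScalars A = ⊤)
    (hd : ∀ i, Pi.single i (Polynomial.X ^ d i) ∈
      degreeBox A d ⊔ (P.restrictScalars A ⊔ maximalIdeal A • ⊤)) :
    degreeBox A d ⊔ P.restrictScalars A = ⊤ := by
  have hmod : degreeBox A d ⊔ (P.restrictScalars A ⊔ maximalIdeal A • ⊤) = ⊤ := by
    have hres : (P ⊔ (maximalIdeal A).map (algebraMap A A[X]) • ⊤).restrictScalars A =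
        P.restrictScalars A ⊔ maximalIdeal A • ⊤ := by
      rw [Submodule.restrictScalars_sup, Ideal.smul_restrictScalars, Submodule.restrictScalars_top]
    rw [← hres] at hd ⊢
    exact degreeBox_sup_restrictScalars_eq_top hd
  rw [eq_top_iff, ← he]
  refine sup_le ?_ le_sup_right
  refine Submodule.le_of_le_smul_of_le_jacobson_bot (fg_degreeBox e)
    (maximalIdeal_le_jacobson _) (le_top.trans ?_)
  rw [← hmod, ← sup_assoc, ← he, Submodule.smul_sup]
  exact sup_le le_sup_left <| sup_le le_sup_right <|
    Submodule.smul_le_right.trans (le_sup_right.trans le_sup_left)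

end LocalRing

end MonicFamilies

open IsLocalRing in
open scoped Polynomial in
theorem free_of_monic_smul_mem {A ι : Type*} [CommRing A] [IsLocalRing A] [IsNoetherianRing A]
    [Finite ι] {P : Submodule A[X] (ι → A[X])} {f : A[X]} (hf : f.Monic) (hfP : ∀ v, f • v ∈ P)
    (hP : P ⊓ (maximalIdeal A).map (algebraMap A A[X]) • ⊤ ≤
      (maximalIdeal A).map (algebraMap A A[X]) • P) :
    Module.Free A[X] P := by
  classical
  have hjac : maximalIdeal A ≤ (⊥ : Ideal A).jacobson := maximalIdeal_le_jacobson _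
  have hPA : P.restrictScalars A ⊓ maximalIdeal A • ⊤ ≤ maximalIdeal A • P.restrictScalars A := by
    rw [← Submodule.restrictScalars_top A A[X], ← Ideal.smul_restrictScalars,
      ← Ideal.smul_restrictScalars]
    exact hP
  have hfi : ∀ i, Pi.single i f ∈ P := fun i => by
    simpa [← Pi.single_smul] using hfP (Pi.single i 1)
  obtain ⟨d, hd, hX⟩ := exists_degreeBox_inf_le_and_single_mem_sup
    (N := P.restrictScalars A ⊔ maximalIdeal A • ⊤) le_sup_right hf
    fun i => Submodule.mem_sup_left (hfi i)
  obtain ⟨e, he⟩ := exists_degreeBox_sup_restrictScalars_eq_top hf hfi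
  have htop := degreeBox_sup_eq_top_of_mod_maximalIdeal he hX
  obtain ⟨W, hW, hWP⟩ := exists_isMonicFamily_mem (d := d) (P := P)
    fun i => htop ▸ Submodule.mem_top
  have hspan : Submodule.span A[X] (Set.range W) = P := by
    apply Submodule.restrictScalars_injective A
    refine eq_of_isCompl_of_inf_le_smul hjac (fg_degreeBox d) hW.isCompl_degreeBox_span
      (Submodule.span_le.2 (Set.range_subset_iff.2 hWP)) ?_
    exact (le_inf inf_le_right <| (inf_le_inf_left _ le_sup_left).trans hd).trans hPA
  rw [← hspan]
  exact .of_basis (.span hW.linearIndependent)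

section Idempotents

variable {R S ι : Type*} [CommRing R] [CommRing S] [Fintype ι]

/-- A square matrix `e` factors as `U * V` with `V * U = 1`; equivalently, `e` is idempotent with
free image. -/
def IdempotentSplits (e : Matrix ι ι R) : Prop :=
  ∃ (r : ℕ) (U : Matrix ι (Fin r) R) (V : Matrix (Fin r) ι R), U * V = e ∧ V * U = 1

/-- `e` splits up to the scalar `c`: it factors as in `IdempotentSplits` once `c` is inverted. -/
def SplitsUpTo (c : R) (e : Matrix ι ι R) : Prop :=
  ∃ (r : ℕ) (U : Matrix ι (Fin r) R) (V : Matrix (Fin r) ι R), U * V = c • e ∧ V * U = c • 1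

theorem SplitsUpTo.smul {c : R} {e : Matrix ι ι R} (h : SplitsUpTo c e) (a : R) :
    SplitsUpTo (a * c) e := by
  obtain ⟨r, U, V, hUV, hVU⟩ := h
  exact ⟨r, a • U, V, by rw [Matrix.smul_mul, hUV, mul_smul],
    by rw [Matrix.mul_smul, hVU, mul_smul]⟩

variable [DecidableEq ι]

theorem IdempotentSplits.map {e : Matrix ι ι R} (h : IdempotentSplits e) (f : R →+* S) :
    IdempotentSplits (f.mapMatrix e) := by
  obtain ⟨r, U, V, rfl, hVU⟩ := h
  exact ⟨r, U.map f, V.map f, Matrix.map_mul.symm,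
    by rw [← Matrix.map_mul, hVU, Matrix.map_one _ f.map_zero f.map_one]⟩

theorem IdempotentSplits.of_isConj {e e' : Matrix ι ι R} (h : IdempotentSplits e)
    (hc : IsConj e e') : IdempotentSplits e' := by
  obtain ⟨r, U, V, rfl, hVU⟩ := h
  obtain ⟨g, hg⟩ := hc
  refine ⟨r, g.val * U, V * g⁻¹.val, ?_, ?_⟩
  · rw [← Matrix.mul_assoc, Matrix.mul_assoc _ U V, hg.eq]
    exact Units.mul_inv_cancel_right e' g
  · rw [Matrix.mul_assoc, ← Matrix.mul_assoc _ _ U, Units.inv_mul, Matrix.one_mul, hVU]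

theorem IdempotentSplits.of_free {e : Matrix ι ι R} (he : IsIdempotentElem e)
    [Module.Free R (LinearMap.range (Matrix.toLin' e))] : IdempotentSplits e := by
  let P := LinearMap.range (Matrix.toLin' e)
  let φ := ((Module.Free.chooseBasis R P).reindex (Fintype.equivFin _)).equivFun
  have hproj : (Matrix.toLin' e).rangeRestrict ∘ₗ P.subtype = LinearMap.id := by
    ext ⟨_, w, rfl⟩ : 2
    exact LinearMap.congr_fun (he.map Matrix.toLinAlgEquiv') w
  refine ⟨_, LinearMap.toMatrix' (P.subtype ∘ₗ φ.symm.toLinearMap),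
    LinearMap.toMatrix' (φ.toLinearMap ∘ₗ (Matrix.toLin' e).rangeRestrict), ?_, ?_⟩
  · have hcomp : (P.subtype ∘ₗ φ.symm.toLinearMap) ∘ₗ φ.toLinearMap ∘ₗ
        (Matrix.toLin' e).rangeRestrict = Matrix.toLin' e := by
      ext : 2
      simp [P]
    rw [← LinearMap.toMatrix'_comp, hcomp, LinearMap.toMatrix'_toLin']
  · rw [← LinearMap.toMatrix'_comp, ← LinearMap.toMatrix'_id, LinearMap.comp_assoc,
      ← LinearMap.comp_assoc φ.symm.toLinearMap, hproj, LinearMap.id_comp, LinearEquiv.comp_symm]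

/-- Every idempotent matrix over `R` splits; equivalently, finite projective modules are free. -/
def AllIdempotentsSplit (R : Type*) [CommRing R] : Prop :=
  ∀ (s : ℕ) (e : Matrix (Fin s) (Fin s) R), IsIdempotentElem e → IdempotentSplits e

theorem AllIdempotentsSplit.of_ringEquiv (h : AllIdempotentsSplit R) (f : R ≃+* S) :
    AllIdempotentsSplit S := fun s e he => by
  have := (h s _ (he.map f.symm.mapMatrix)).map (f : R →+* S)
  convert this
  ext i j
  simp

theorem allIdempotentsSplit_of_field (k : Type*) [Field k] : AllIdempotentsSplit k :=
  fun _ _ he => .of_free he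

theorem AllIdempotentsSplit.free (h : AllIdempotentsSplit R) (P : Type*) [AddCommGroup P]
    [Module R P] [Module.Finite R P] [Module.Projective R P] : Module.Free R P := by
  obtain ⟨s, p, hp⟩ := Module.Finite.exists_fin' R P
  obtain ⟨q, hpq⟩ := Module.projective_lifting_property p LinearMap.id hp
  have hidem : IsIdempotentElem (q ∘ₗ p) :=
    LinearMap.ext fun v => congrArg q (LinearMap.congr_fun hpq (p v))
  obtain ⟨r, U, V, hUV, hVU⟩ := h s _ (hidem.map LinearMap.toMatrixAlgEquiv')
  have hUV' : Matrix.toLin' U ∘ₗ Matrix.toLin' V = q ∘ₗ p := by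
    rw [← Matrix.toLin'_mul, hUV]
    exact Matrix.toLin'_toMatrix' (q ∘ₗ p)
  have hVU' : Matrix.toLin' V ∘ₗ Matrix.toLin' U = LinearMap.id := by
    rw [← Matrix.toLin'_mul, hVU, Matrix.toLin'_one]
  refine .of_equiv (.ofLinearMap (p ∘ₗ Matrix.toLin' U) (Matrix.toLin' V ∘ₗ q) ?_ ?_)
  · calc (p ∘ₗ Matrix.toLin' U) ∘ₗ Matrix.toLin' V ∘ₗ q
        = p ∘ₗ (Matrix.toLin' U ∘ₗ Matrix.toLin' V) ∘ₗ q := rfl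
      _ = (p ∘ₗ q) ∘ₗ p ∘ₗ q := by rw [hUV']; rfl
      _ = LinearMap.id := by rw [hpq, LinearMap.id_comp]
  · calc (Matrix.toLin' V ∘ₗ q) ∘ₗ p ∘ₗ Matrix.toLin' U
        = Matrix.toLin' V ∘ₗ (q ∘ₗ p) ∘ₗ Matrix.toLin' U := rfl
      _ = (Matrix.toLin' V ∘ₗ Matrix.toLin' U) ∘ₗ Matrix.toLin' V ∘ₗ Matrix.toLin' U := by
          rw [← hUV']; rfl
      _ = LinearMap.id := by rw [hVU', LinearMap.id_comp]

theorem SplitsUpTo.map {c : R} {e : Matrix ι ι R} (h : SplitsUpTo c e) (f : R →+* S) :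
    SplitsUpTo (f c) (f.mapMatrix e) := by
  obtain ⟨r, U, V, hUV, hVU⟩ := h
  refine ⟨r, U.map f, V.map f, ?_, ?_⟩
  · rw [← Matrix.map_mul, hUV, Matrix.map_smul' _ _ _ (map_mul f), RingHom.mapMatrix_apply]
  · rw [← Matrix.map_mul, hVU, Matrix.map_smul' _ _ _ (map_mul f),
      Matrix.map_one _ f.map_zero f.map_one]

theorem exists_matrix_clear_denom (T : Submonoid R) {L : Type*} [CommRing L] [Algebra R L]
    [IsLocalization T L] {m n : Type*} [Finite m] [Finite n] (U : Matrix m n L) :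
    ∃ c ∈ T, ∃ U' : Matrix m n R, U'.map (algebraMap R L) = algebraMap R L c • U := by
  obtain ⟨b, hb⟩ := IsLocalization.exist_integer_multiples_of_finite T
    (fun x : m × n => U x.1 x.2)
  choose u hu using hb
  refine ⟨b, b.2, .of fun i j => u (i, j), ?_⟩
  ext i j
  rw [Matrix.map_apply, Matrix.of_apply, hu, Algebra.smul_def, Matrix.smul_apply, smul_eq_mul]

theorem exists_splitsUpTo (T : Submonoid R) {L : Type*} [CommRing L] [Algebra R L]
    [IsLocalization T L] (hinj : Function.Injective (algebraMap R L)) {e : Matrix ι ι R}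
    (h : IdempotentSplits ((algebraMap R L).mapMatrix e)) : ∃ c ∈ T, SplitsUpTo c e := by
  obtain ⟨r, U, V, hUV, hVU⟩ := h
  obtain ⟨a, ha, U', hU'⟩ := exists_matrix_clear_denom T U
  obtain ⟨b, hb, V', hV'⟩ := exists_matrix_clear_denom T V
  refine ⟨a * b, mul_mem ha hb, r, U', V', Matrix.map_injective hinj ?_,
    Matrix.map_injective hinj ?_⟩ <;> dsimp only
  · rw [Matrix.map_smul' _ _ _ (map_mul _), map_mul, Matrix.map_mul, hU', hV',
      Matrix.smul_mul, Matrix.mul_smul, hUV, smul_smul, RingHom.mapMatrix_apply]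
  · rw [Matrix.map_smul' _ _ _ (map_mul _), map_mul, Matrix.map_mul, hU', hV',
      Matrix.smul_mul, Matrix.mul_smul, hVU, smul_smul, mul_comm,
      Matrix.map_one _ (map_zero _) (map_one _)]

theorem range_toLin'_inf_smul_top_le {κ : Type*} [Fintype κ] {I : Ideal R}
    [I.IsPrime] {c : R} (hc : c ∉ I) {e : Matrix ι ι R} {U : Matrix ι κ R} {V : Matrix κ ι R}
    (hUV : U * V = c • e) (hVe : V * e = V) :
    LinearMap.range (Matrix.toLin' V) ⊓ I • ⊤ ≤ I • LinearMap.range (Matrix.toLin' V) := by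
  classical
  rintro _ ⟨⟨y, rfl⟩, hy⟩
  have hUy : c • e.mulVec y ∈ I • (⊤ : Submodule R (ι → R)) := by
    rw [← Matrix.smul_mulVec, ← hUV, ← Matrix.mulVec_mulVec, ← Matrix.toLin'_apply,
      ← Matrix.toLin'_apply]
    have := Submodule.mem_map_of_mem (f := Matrix.toLin' U) hy
    rw [Submodule.map_smul''] at this
    exact Submodule.smul_mono le_rfl le_top this
  have hey : e.mulVec y ∈ I • (⊤ : Submodule R (ι → R)) :=
    mem_ideal_smul_top_pi_iff.2 fun i =>
      (Ideal.IsPrime.mem_or_mem ‹_› (mem_ideal_smul_top_pi_iff.1 hUy i)).resolve_left hc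
  rw [LinearMap.range_eq_map, ← Submodule.map_smul'']
  exact ⟨e.mulVec y, hey, by simp [hVe]⟩

end Idempotents

open IsLocalRing in
open scoped Polynomial in
theorem idempotentSplits_of_monic {A ι : Type*} [CommRing A] [IsLocalRing A] [IsNoetherianRing A]
    [Fintype ι] {f : A[X]} (hf : f.Monic) {e : Matrix ι ι A[X]} (he : IsIdempotentElem e)
    (h : SplitsUpTo f e) : IdempotentSplits e := by
  classical
  obtain ⟨r, U, V, hUV, hVU⟩ := h
  have hreg : IsSMulRegular A[X] f := hf.isRegular.left.isSMulRegular
  have hVe : V * e = V := hreg.matrix <| by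
    simp only
    rw [← Matrix.mul_smul, ← hUV, ← Matrix.mul_assoc, hVU, Matrix.smul_mul, Matrix.one_mul]
  have hfm : f ∉ (maximalIdeal A).map (algebraMap A A[X]) := fun hmem => by
    have hlead := Ideal.mem_map_C_iff.1 hmem f.natDegree
    exact (mem_maximalIdeal _).1 hlead (hf.coeff_natDegree ▸ isUnit_one)
  have hfree : Module.Free A[X] (LinearMap.range (Matrix.toLin' V)) := by
    have : ((maximalIdeal A).map (algebraMap A A[X])).IsPrime := Ideal.isPrime_map_C_of_isPrime
    refine free_of_monic_smul_mem hf (fun v => ⟨U.mulVec v, ?_⟩)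
      (range_toLin'_inf_smul_top_le hfm hUV hVe)
    rw [Matrix.toLin'_apply, Matrix.mulVec_mulVec, hVU, Matrix.smul_mulVec, Matrix.one_mulVec]
  let ψ := (Matrix.toLin' V).domRestrict (LinearMap.range (Matrix.toLin' e))
  have hψ : LinearMap.range ψ = LinearMap.range (Matrix.toLin' V) := by
    rw [LinearMap.range_domRestrict, ← LinearMap.range_comp, ← Matrix.toLin'_mul, hVe]
  have hψi : Function.Injective ψ := by
    refine (injective_iff_map_eq_zero ψ).2 fun ⟨_, y, rfl⟩ hy => Subtype.ext ?_
    have hVy : V.mulVec y = 0 := by simpa [ψ, hVe] using hy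
    have hfe : f • e.mulVec y = 0 := by
      rw [← Matrix.smul_mulVec, ← hUV, ← Matrix.mulVec_mulVec, hVy, Matrix.mulVec_zero]
    exact (isSMulRegular_iff_right_eq_zero_of_smul.1 (IsSMulRegular.pi fun _ => hreg)) _ hfe
  have := Module.Free.of_equiv (((LinearEquiv.ofInjective ψ hψi).trans (.ofEq _ _ hψ)).symm)
  exact .of_free he

/-! ### The Quillen–Suslin theorem -/

section Patching

open Polynomial (compRingHom mapRingHom)
open scoped Polynomial

theorem mul_eq_zero_of_mul_mul_mul_eq_zero {R ι κ κ' : Type*} [CommRing R] [Fintype ι] [Fintype κ]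
    [Fintype κ'] [DecidableEq κ] [DecidableEq κ'] {U : Matrix ι κ R} {V : Matrix κ ι R}
    {U' : Matrix ι κ' R} {V' : Matrix κ' ι R} (hVU : V * U = 1) (hVU' : V' * U' = 1)
    (h : U * V * (U' * V') = 0) : V * U' = 0 := by
  calc V * U' = V * U * V * (U' * (V' * U')) := by rw [hVU, hVU', Matrix.one_mul, Matrix.mul_one]
    _ = V * (U * V * (U' * V')) * U' := by simp only [Matrix.mul_assoc]
    _ = 0 := by rw [h, Matrix.mul_zero, Matrix.zero_mul]

theorem IdempotentSplits.isConj_mapMatrix {R ι : Type*} [CommRing R] [Fintype ι] [DecidableEq ι]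
    {e : Matrix ι ι R} (he : IsIdempotentElem e) (h : IdempotentSplits e)
    (h' : IdempotentSplits (1 - e)) (ρ : R →+* R) : IsConj e (ρ.mapMatrix e) := by
  obtain ⟨r, U, V, hUV, hVU⟩ := h
  obtain ⟨r', U', V', hUV', hVU'⟩ := h'
  have hVU₁ : V * U' = 0 := mul_eq_zero_of_mul_mul_mul_eq_zero hVU hVU' <| by
    rw [hUV, hUV', he.mul_one_sub_self]
  have hVU₂ : V' * U = 0 := mul_eq_zero_of_mul_mul_mul_eq_zero hVU' hVU <| by
    rw [hUV, hUV', he.one_sub_mul_self]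
  let g := U.map ρ * V + U'.map ρ * V'
  let g' := U * V.map ρ + U' * V'.map ρ
  have hg' : g' * g = 1 := by
    calc g' * g = U * (V * U).map ρ * V + U * (V * U').map ρ * V' + U' * (V' * U).map ρ * V
          + U' * (V' * U').map ρ * V' := by
            simp only [g, g', Matrix.map_mul, Matrix.mul_add, Matrix.add_mul, Matrix.mul_assoc]
            abel
      _ = 1 := by simp [hVU, hVU', hVU₁, hVU₂, Matrix.map_one, Matrix.map_zero, hUV, hUV']
  refine ⟨⟨g, g', mul_eq_one_comm.1 hg', hg'⟩, ?_⟩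
  calc g * e = U.map ρ * (V * U) * V + U'.map ρ * (V' * U) * V := by
        simp only [g, ← hUV, Matrix.add_mul, Matrix.mul_assoc]
    _ = U.map ρ * (V * U).map ρ * V + U.map ρ * (V * U').map ρ * V' := by
        simp [hVU, hVU₁, hVU₂, Matrix.map_one, Matrix.map_zero]
    _ = ρ.mapMatrix e * g := by
        simp only [g, ← hUV, RingHom.mapMatrix_apply, Matrix.map_mul, Matrix.mul_add,
          Matrix.mul_assoc]

variable {A ι : Type*} [CommRing A]

theorem C_dvd_comp_add_sub_comp (t : A) (x y p : A[X]) :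
    Polynomial.C t ∣ p.comp (x + Polynomial.C t * y) - p.comp x := by
  have := Polynomial.sub_dvd_eval_sub (x + Polynomial.C t * y) x (p.map Polynomial.C)
  rw [Polynomial.eval_map, Polynomial.eval_map, add_sub_cancel_left] at this
  exact (dvd_mul_right _ y).trans this

variable [Fintype ι] [DecidableEq ι]

theorem compRingHom_mapMatrix_mapRingHom {B : Type*} [CommRing B] (f : A →+* B) (x : A[X])
    (G : Matrix ι ι A[X]) :
    (compRingHom (mapRingHom f x)).mapMatrix ((mapRingHom f).mapMatrix G) =
      (mapRingHom f).mapMatrix ((compRingHom x).mapMatrix G) :=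
  Matrix.ext fun i j => (Polynomial.map_comp f (G i j) x).symm

theorem compRingHom_mapMatrix_compRingHom_zero (x : A[X]) (G : Matrix ι ι A[X]) :
    (compRingHom x).mapMatrix ((compRingHom 0).mapMatrix G) = (compRingHom 0).mapMatrix G := by
  ext i j : 1
  simp

theorem compRingHom_mapMatrix_C_smul (x : A[X]) (a : A) (G : Matrix ι ι A[X]) :
    (compRingHom x).mapMatrix (Polynomial.C a • G) =
      Polynomial.C a • (compRingHom x).mapMatrix G := by
  ext i j : 1
  simp

attribute [local instance] Polynomial.algebra in
theorem exists_matrix_polynomial_clear_denom (T : Submonoid A) {L : Type*} [CommRing L]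
    [Algebra A L] [IsLocalization T L] (g : Matrix ι ι L[X]) :
    ∃ a ∈ T, ∃ G : Matrix ι ι A[X],
      (mapRingHom (algebraMap A L)).mapMatrix G = Polynomial.C (algebraMap A L a) • g := by
  have := Polynomial.isLocalization T L
  obtain ⟨_, ⟨a, ha, rfl⟩, G, hG⟩ := exists_matrix_clear_denom (T.map Polynomial.C) g
  exact ⟨a, ha, G, hG.trans (by rw [Polynomial.algebraMap_def, Polynomial.coe_mapRingHom,
    Polynomial.map_C])⟩

/-- With `g' = G / a` and `g = H / b`, Taylor expansion gives `G(x + a b y) = G(x) + a b D`, so that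
`g'(x + a b y) g(x) = 1 + D H(x)` has no denominators. -/
theorem exists_mapMatrix_eq_comp_mul_comp (T : Submonoid A) {L : Type*} [CommRing L] [Algebra A L]
    [IsLocalization T L] {g g' : Matrix ι ι L[X]} (h : g' * g = 1) :
    ∃ t ∈ T, ∀ x y : A[X], ∃ K : Matrix ι ι A[X],
      (mapRingHom (algebraMap A L)).mapMatrix K =
        (compRingHom (mapRingHom (algebraMap A L) (x + Polynomial.C t * y))).mapMatrix g' *
        (compRingHom (mapRingHom (algebraMap A L) x)).mapMatrix g := by
  obtain ⟨a, ha, G, hG⟩ := exists_matrix_polynomial_clear_denom T g'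
  obtain ⟨b, hb, H, hH⟩ := exists_matrix_polynomial_clear_denom T g
  refine ⟨a * b, mul_mem ha hb, fun x y => ?_⟩
  let φ := mapRingHom (algebraMap A L)
  choose D hD using fun i j => C_dvd_comp_add_sub_comp (a * b) x y (G i j)
  have hGD : (compRingHom (x + Polynomial.C (a * b) * y)).mapMatrix G =
      (compRingHom x).mapMatrix G + Polynomial.C (a * b) • .of D := by
    ext i j : 1
    simpa using sub_eq_iff_eq_add'.1 (hD i j)
  have hg' : (compRingHom (φ (x + Polynomial.C (a * b) * y))).mapMatrix g' =
      (compRingHom (φ x)).mapMatrix g' +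
        Polynomial.C (algebraMap A L b) • φ.mapMatrix (.of D) := by
    have hunit : IsUnit (Polynomial.C (algebraMap A L a)) :=
      (IsLocalization.map_units L ⟨a, ha⟩).map Polynomial.C
    refine hunit.smul_left_cancel.1 ?_
    rw [smul_add, ← compRingHom_mapMatrix_C_smul, ← compRingHom_mapMatrix_C_smul, ← hG,
      compRingHom_mapMatrix_mapRingHom, compRingHom_mapMatrix_mapRingHom, hGD, map_add, smul_smul,
      RingHom.mapMatrix_apply φ (_ • _), Matrix.map_smul' _ _ _ (map_mul φ)]
    simp [φ]
  refine ⟨1 + .of D * (compRingHom x).mapMatrix H, ?_⟩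
  rw [hg', add_mul, ← map_mul, h, map_one, map_add, map_one, map_mul,
    ← compRingHom_mapMatrix_mapRingHom, hH, compRingHom_mapMatrix_C_smul, Matrix.smul_mul,
    Matrix.mul_smul]

theorem exists_forall_isConj_comp {T : Submonoid A} (hT : T ≤ nonZeroDivisors A) (L : Type*)
    [CommRing L] [Algebra A L] [IsLocalization T L] {e : Matrix ι ι A[X]}
    (he : IsConj ((mapRingHom (algebraMap A L)).mapMatrix e)
      ((compRingHom 0).mapMatrix ((mapRingHom (algebraMap A L)).mapMatrix e))) :
    ∃ t ∈ T, ∀ x y : A[X], IsConj ((compRingHom x).mapMatrix e)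
      ((compRingHom (x + Polynomial.C t * y)).mapMatrix e) := by
  let φ := mapRingHom (algebraMap A L)
  have hinj : Function.Injective (φ.mapMatrix : Matrix ι ι A[X] →+* _) :=
    Matrix.map_injective (Polynomial.map_injective _ (IsLocalization.injective L hT))
  obtain ⟨g, hg⟩ := he
  obtain ⟨t, ht, hK⟩ := exists_mapMatrix_eq_comp_mul_comp T g.inv_mul
  refine ⟨t, ht, fun x y => ?_⟩
  let x' := x + Polynomial.C t * y
  let γ (z : A[X]) : (Matrix ι ι L[X])ˣ := Units.map (compRingHom (φ z)).mapMatrix.toMonoidHom g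
  have hγ (z : A[X]) : SemiconjBy (γ z).val (φ.mapMatrix ((compRingHom z).mapMatrix e))
      ((compRingHom 0).mapMatrix (φ.mapMatrix e)) := by
    have := hg.map (compRingHom (φ z)).mapMatrix
    rwa [compRingHom_mapMatrix_mapRingHom, compRingHom_mapMatrix_compRingHom_zero] at this
  obtain ⟨K, hK₁⟩ : ∃ K : Matrix ι ι A[X], φ.mapMatrix K = ↑((γ x')⁻¹ * γ x) := hK x y
  obtain ⟨K', hK₂⟩ : ∃ K' : Matrix ι ι A[X], φ.mapMatrix K' = ↑((γ x)⁻¹ * γ x') := by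
    obtain ⟨K', hK'⟩ := hK x' (-y)
    rw [mul_neg, add_neg_cancel_right] at hK'
    exact ⟨K', hK'⟩
  have hKK' : K * K' = 1 := hinj <| by
    rw [map_mul, hK₁, hK₂, ← Units.val_mul, map_one, mul_assoc, mul_inv_cancel_left, inv_mul_cancel,
      Units.val_one]
  refine ⟨⟨K, K', hKK', mul_eq_one_comm.1 hKK'⟩, hinj ?_⟩
  rw [map_mul, map_mul, hK₁, Units.val_mul]
  exact (hγ x').units_inv_symm_left.mul_left (hγ x)

/-- The Quillen ideal of a matrix `e` of polynomials in `X`: the `a` such that translating the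
variable by a multiple of `a` does not change the conjugacy class of `e`. -/
def quillenIdeal (e : Matrix ι ι A[X]) : Ideal A where
  carrier := {a | ∀ x y : A[X], IsConj ((compRingHom x).mapMatrix e)
    ((compRingHom (x + Polynomial.C a * y)).mapMatrix e)}
  zero_mem' x y := by simp [IsConj.refl]
  add_mem' {a b} ha hb x y := by
    rw [Polynomial.C_add, add_mul, ← add_assoc]
    exact (ha x y).trans (hb _ y)
  smul_mem' c a ha x y := by
    rw [smul_eq_mul, mul_comm c, Polynomial.C_mul, mul_assoc]
    exact ha x _

theorem isConj_compRingHom_zero [IsDomain A] {e : Matrix ι ι A[X]}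
    (h : ∀ (m : Ideal A) [m.IsMaximal],
      IsConj ((mapRingHom (algebraMap A (Localization.AtPrime m))).mapMatrix e)
        ((compRingHom 0).mapMatrix
          ((mapRingHom (algebraMap A (Localization.AtPrime m))).mapMatrix e))) :
    IsConj ((compRingHom 0).mapMatrix e) e := by
  have htop : quillenIdeal e = ⊤ := by
    by_contra hne
    obtain ⟨m, hm, hle⟩ := Ideal.exists_le_maximal _ hne
    obtain ⟨t, htm, ht⟩ := exists_forall_isConj_comp m.primeCompl_le_nonZeroDivisors
      (Localization.AtPrime m) (h m)
    exact htm (hle ht)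
  have hX := (Ideal.eq_top_iff_one _).1 htop 0 Polynomial.X
  convert hX
  ext i j : 2
  simp

end Patching

section QuillenSuslin

open scoped Polynomial

/-- The isomorphism `R[T][σ] ≃ R[σ][T]`. -/
noncomputable def polynomialMvPolynomialEquiv (σ R : Type*) [CommRing R] :
    MvPolynomial σ R[X] ≃+* (MvPolynomial σ R)[X] :=
  ((optionEquivRight R σ).symm.trans (optionEquivLeft R σ)).toRingEquiv

theorem polynomialMvPolynomialEquiv_C (σ : Type*) {R : Type*} [CommRing R] (f : R[X]) :
    polynomialMvPolynomialEquiv σ R (C f) = f.map (algebraMap R (MvPolynomial σ R)) := by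
  have hC (a : R) : (optionEquivRight R σ).symm (C (Polynomial.C a)) = C a := by
    rw [AlgEquiv.symm_apply_eq, optionEquivRight_C]
  have hX : (optionEquivRight R σ).symm (C Polynomial.X) = X none := by
    rw [AlgEquiv.symm_apply_eq, optionEquivRight_X_none]
  have : (polynomialMvPolynomialEquiv σ R).toRingHom.comp C =
      Polynomial.mapRingHom (algebraMap R (MvPolynomial σ R)) := by
    refine Polynomial.ringHom_ext (fun a => ?_) ?_ <;>
    simp [polynomialMvPolynomialEquiv, hC, hX, optionEquivLeft_C, optionEquivLeft_X_none]
  exact RingHom.congr_fun this f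

attribute [local instance] MvPolynomial.algebraMvPolynomial in
theorem exists_monic_splitsUpTo {σ k : Type*} [Field k]
    (h : AllIdempotentsSplit (MvPolynomial σ (FractionRing k[X]))) {s : ℕ}
    {e : Matrix (Fin s) (Fin s) (MvPolynomial σ k)[X]} (he : IsIdempotentElem e) :
    ∃ f : (MvPolynomial σ k)[X], f.Monic ∧ SplitsUpTo f e := by
  let ψ := polynomialMvPolynomialEquiv σ k
  have hinj : Function.Injective
      (algebraMap (MvPolynomial σ k[X]) (MvPolynomial σ (FractionRing k[X]))) :=
    MvPolynomial.map_injective _ (IsFractionRing.injective _ _)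
  obtain ⟨_, ⟨f, hf, rfl⟩, hsplits⟩ := exists_splitsUpTo
    ((nonZeroDivisors k[X]).map (C (σ := σ))) hinj (h s _ ((he.map ψ.symm.mapMatrix).map
      (algebraMap (MvPolynomial σ k[X]) (MvPolynomial σ (FractionRing k[X]))).mapMatrix))
  have hmonic : (ψ (C (Polynomial.C f.leadingCoeff⁻¹ * f))).Monic := by
    rw [polynomialMvPolynomialEquiv_C, mul_comm]
    exact (Polynomial.monic_mul_leadingCoeff_inv (nonZeroDivisors.ne_zero hf)).map _
  refine ⟨_, hmonic, ?_⟩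
  convert (hsplits.smul (C (Polynomial.C f.leadingCoeff⁻¹))).map (ψ : _ →+* (MvPolynomial σ k)[X])
  · simp
  · ext i j : 1
    simp

theorem allIdempotentsSplit_polynomial_mvPolynomial {σ k : Type*} [Finite σ] [Field k]
    (h : AllIdempotentsSplit (MvPolynomial σ k))
    (h' : AllIdempotentsSplit (MvPolynomial σ (FractionRing k[X]))) :
    AllIdempotentsSplit (MvPolynomial σ k)[X] := by
  intro s e he
  have hlocal {e : Matrix (Fin s) (Fin s) (MvPolynomial σ k)[X]} (he : IsIdempotentElem e)
      (m : Ideal (MvPolynomial σ k)) [m.IsMaximal] : IdempotentSplits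
        ((Polynomial.mapRingHom (algebraMap _ (Localization.AtPrime m))).mapMatrix e) := by
    have : IsNoetherianRing (Localization.AtPrime m) :=
      IsLocalization.isNoetherianRing m.primeCompl _ inferInstance
    obtain ⟨f, hf, hfe⟩ := exists_monic_splitsUpTo h' he
    exact idempotentSplits_of_monic (hf.map _) (he.map _) (hfe.map _)
  have hconj : IsConj ((Polynomial.compRingHom 0).mapMatrix e) e :=
    isConj_compRingHom_zero fun m _ => (hlocal he m).isConj_mapMatrix (he.map _)
      (by simpa only [map_sub, map_one] using hlocal he.one_sub m) _
  have hzero : IdempotentSplits ((Polynomial.compRingHom 0).mapMatrix e) := by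
    convert (h s _ (he.map (Polynomial.evalRingHom 0).mapMatrix)).map Polynomial.C
    ext i j : 1
    simp
  exact hzero.of_isConj hconj

/-- The Quillen–Suslin theorem, for idempotent matrices. -/
theorem allIdempotentsSplit_mvPolynomial (σ : Type*) [Finite σ] (k : Type*) [Field k] :
    AllIdempotentsSplit (MvPolynomial σ k) := by
  induction σ using Finite.induction_empty_option generalizing k with
  | of_equiv φ ih => exact (ih k).of_ringEquiv (renameEquiv k φ).toRingEquiv
  | h_empty =>
    exact (allIdempotentsSplit_of_field k).of_ringEquiv (isEmptyRingEquiv k PEmpty).symm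
  | @h_option σ _ ih =>
    exact (allIdempotentsSplit_polynomial_mvPolynomial (ih k) (ih (FractionRing k[X]))).of_ringEquiv
      (optionEquivLeft k σ).symm.toRingEquiv

end QuillenSuslin

/-! ### Local cohomology and regular sequences -/

universe u

section LeftDerived

open Limits

variable {D : Type*} [Category* D] [Abelian D]

theorem exists_d_comp_eq_of_homologyι_comp_descOpcycles_eq_zero {ι : Type*} {c : ComplexShape ι}
    (K : HomologicalComplex D c) {i j l : ι} (hj : c.prev i = j) (hl : c.next i = l)
    {A : D} [Injective A] (a : K.X i ⟶ A) (ha : K.d j i ≫ a = 0)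
    (h : K.homologyι i ≫ K.descOpcycles a j hj ha = 0) :
    ∃ g : K.X l ⟶ A, K.d i l ≫ g = a := by
  have hS : (ShortComplex.mk (K.homologyι i) (K.fromOpcycles i l)
      (K.homologyι_comp_fromOpcycles i l)).Exact :=
    ShortComplex.exact_of_f_is_kernel _ (K.homologyIsKernel i l hl)
  refine ⟨hS.descToInjective _ h, ?_⟩
  have hdesc : K.fromOpcycles i l ≫ hS.descToInjective _ h = K.descOpcycles a j hj ha :=
    hS.comp_descToInjective _ h
  rw [← K.p_fromOpcycles i l, Category.assoc, hdesc, K.p_descOpcycles]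

variable {C : Type*} [Category* C] [Abelian C]

theorem nonempty_projectiveResolution_hom {X Y : C} (f : X ⟶ Y) (P : ProjectiveResolution X)
    (Q : ProjectiveResolution Y) : Nonempty (ProjectiveResolution.Hom P Q f) :=
  ⟨⟨ProjectiveResolution.lift f P Q,
    (ProjectiveResolution.lift_commutes_zero f P Q).trans (by simp)⟩⟩

variable [HasProjectiveResolutions C] (F : C ⥤ D) [F.Additive]

/-- The morphism out of a left derived functor induced by a cocycle on a projective resolution. -/
noncomputable def leftDerivedDesc {X : C} (Q : ProjectiveResolution X) (n : ℕ) {A : D}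
    (a : F.obj (Q.complex.X n) ⟶ A) (ha : F.map (Q.complex.d (n + 1) n) ≫ a = 0) :
    (F.leftDerived n).obj X ⟶ A :=
  (Q.isoLeftDerivedObj F n).hom ≫
    ((F.mapHomologicalComplex _).obj Q.complex).homologyι n ≫
      ((F.mapHomologicalComplex _).obj Q.complex).descOpcycles a (n + 1) (by simp) ha

theorem leftDerived_map_comp_leftDerivedDesc {X Y : C} {f : X ⟶ Y} {P : ProjectiveResolution X}
    {Q : ProjectiveResolution Y} (φ : ProjectiveResolution.Hom P Q f) (n : ℕ) {A : D}
    (a : F.obj (Q.complex.X n) ⟶ A) (ha : F.map (Q.complex.d (n + 1) n) ≫ a = 0) :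
    (F.leftDerived n).map f ≫ leftDerivedDesc F Q n a ha =
      leftDerivedDesc F P n (F.map (φ.hom.f n) ≫ a) (by
        rw [← F.map_comp_assoc, ← φ.hom.comm, F.map_comp_assoc, ha, comp_zero]) := by
  have h := ProjectiveResolution.isoLeftDerivedObj_hom_naturality f P Q φ.hom
    (φ.hom_f_zero_comp_π_f_zero.trans (by simp)) F n
  dsimp only [leftDerivedDesc, Functor.comp_map, HomologicalComplex.homologyFunctor_map] at h ⊢
  rw [reassoc_of% h]
  congr 1
  refine (HomologicalComplex.homologyι_naturality_assoc _ _ _).trans ?_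
  congr 1
  rw [← cancel_epi (HomologicalComplex.pOpcycles _ _), HomologicalComplex.p_opcyclesMap_assoc]
  exact (congrArg (_ ≫ ·) (HomologicalComplex.p_descOpcycles ..)).trans
    (HomologicalComplex.p_descOpcycles ..).symm

theorem exists_d_comp_eq_of_leftDerivedDesc_eq_zero {X : C} (Q : ProjectiveResolution X) (n : ℕ)
    {A : D} [Injective A] (a : F.obj (Q.complex.X n) ⟶ A)
    (ha : F.map (Q.complex.d (n + 1) n) ≫ a = 0) (h : leftDerivedDesc F Q n a ha = 0) :
    ∃ g : F.obj (Q.complex.X (n - 1)) ⟶ A, F.map (Q.complex.d n (n - 1)) ≫ g = a := by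
  refine exists_d_comp_eq_of_homologyι_comp_descOpcycles_eq_zero
    ((F.mapHomologicalComplex _).obj Q.complex) (j := n + 1) (l := n - 1) (by simp) ?_ a ha
    ((cancel_epi (Q.isoLeftDerivedObj F n).hom).1 (h.trans comp_zero.symm))
  cases n <;> simp

end LeftDerived

section DerivedExt

open Limits Opposite

variable {R : Type u} [CommRing R]

/-- An element of the module `Hom(X, N)`, encoded as a morphism from `Hom(X, N)` to `R` in the
opposite category, which is where the left derived functor defining `Ext` takes its values. -/
noncomputable def homElement {X N : ModuleCat.{u} R} (a : X ⟶ N) :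
    ((linearYoneda R (ModuleCat.{u} R)).obj N).rightOp.obj X ⟶ op (ModuleCat.of R R) :=
  (ModuleCat.ofHom (LinearMap.toSpanSingleton R (X ⟶ N) a)).op

theorem map_comp_homElement {X Y N : ModuleCat.{u} R} (f : X ⟶ Y) (a : Y ⟶ N) :
    ((linearYoneda R (ModuleCat.{u} R)).obj N).rightOp.map f ≫ homElement a =
      homElement (f ≫ a) := by
  apply Quiver.Hom.unop_inj
  ext
  change f ≫ ((1 : R) • a) = (1 : R) • (f ≫ a)
  simp

theorem homElement_zero {X N : ModuleCat.{u} R} : homElement (0 : X ⟶ N) = 0 := by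
  apply Quiver.Hom.unop_inj
  ext
  exact one_smul R (0 : X ⟶ N)

theorem map_comp_homElement_eq_zero {X Y N : ModuleCat.{u} R} {f : X ⟶ Y} {a : Y ⟶ N}
    (h : f ≫ a = 0) :
    ((linearYoneda R (ModuleCat.{u} R)).obj N).rightOp.map f ≫ homElement a = 0 := by
  rw [map_comp_homElement, h, homElement_zero]

theorem exists_comp_eq_of_map_comp_eq_homElement {X Y N : ModuleCat.{u} R} {f : X ⟶ Y} {a : X ⟶ N}
    {g : ((linearYoneda R (ModuleCat.{u} R)).obj N).rightOp.obj Y ⟶ op (ModuleCat.of R R)}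
    (h : ((linearYoneda R (ModuleCat.{u} R)).obj N).rightOp.map f ≫ g = homElement a) :
    ∃ b : Y ⟶ N, f ≫ b = a := by
  have hsmul : f ≫ g.unop.hom (1 : R) = (1 : R) • a := congr(($h).unop.hom (1 : R))
  exact ⟨g.unop.hom (1 : R), by rwa [one_smul] at hsmul⟩

/-- The class in `Ext`, defined by left derived functors, of a cocycle on a projective
resolution. -/
noncomputable def derivedExtClass {X N : ModuleCat.{u} R} (Q : ProjectiveResolution X) {n : ℕ}
    (a : Q.complex.X n ⟶ N) (ha : Q.complex.d (n + 1) n ≫ a = 0) :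
    ((Ext R (ModuleCat.{u} R) n).obj (op X)).obj N :=
  (leftDerivedDesc ((linearYoneda R (ModuleCat.{u} R)).obj N).rightOp Q n (homElement a)
    (map_comp_homElement_eq_zero ha)).unop.hom (1 : R)

theorem ext_map_derivedExtClass {X Y N : ModuleCat.{u} R} {f : X ⟶ Y} {P : ProjectiveResolution X}
    {Q : ProjectiveResolution Y} (φ : ProjectiveResolution.Hom P Q f) {n : ℕ}
    (a : Q.complex.X n ⟶ N) (ha : Q.complex.d (n + 1) n ≫ a = 0) :
    (((Ext R (ModuleCat.{u} R) n).map f.op).app N).hom (derivedExtClass Q a ha) =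
      derivedExtClass P (φ.hom.f n ≫ a) (by
        rw [← Category.assoc, ← φ.hom.comm, Category.assoc, ha, comp_zero]) := by
  have h := leftDerived_map_comp_leftDerivedDesc
    ((linearYoneda R (ModuleCat.{u} R)).obj N).rightOp φ n (homElement a)
    (map_comp_homElement_eq_zero ha)
  simp only [map_comp_homElement] at h
  exact congr(($h).unop.hom (1 : R))

theorem extMk_eq_zero_of_derivedExtClass_eq_zero {X N : ModuleCat.{u} R}
    (Q : ProjectiveResolution X) {n : ℕ} (a : Q.complex.X n ⟶ N)
    (ha : Q.complex.d (n + 1) n ≫ a = 0) (h : derivedExtClass Q a ha = 0) :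
    Q.extMk a (n + 1) rfl ha = 0 := by
  have : Projective (ModuleCat.of R R) := inferInstance
  have hdesc : leftDerivedDesc ((linearYoneda R (ModuleCat.{u} R)).obj N).rightOp Q n
      (homElement a) (map_comp_homElement_eq_zero ha) = 0 := by
    apply Quiver.Hom.unop_inj
    ext
    exact h
  obtain ⟨g, hg⟩ := exists_d_comp_eq_of_leftDerivedDesc_eq_zero _ Q n _ _ hdesc
  obtain ⟨b, hb⟩ := exists_comp_eq_of_map_comp_eq_homElement hg
  cases n with
  | zero =>
    obtain rfl : a = 0 := by rw [← hb]; simp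
    exact ProjectiveResolution.extMk_zero _ _ _
  | succ p => exact (Q.extMk_eq_zero_iff a _ rfl ha p rfl).2 ⟨b, hb⟩

end DerivedExt

section LocalizedModules

open RingTheory.Sequence TensorProduct

variable {R : Type*} [CommRing R]

/-- Localization commutes with the formation of `M / x M`. -/
noncomputable def quotSMulTopLocalizedModuleEquiv (S : Submonoid R) (x : R) (M : Type*)
    [AddCommGroup M] [Module R M] :
    QuotSMulTop x (LocalizedModule S M) ≃ₗ[R] LocalizedModule S (QuotSMulTop x M) :=
  QuotSMulTop.congr x ((LocalizedModule.equivTensorProduct S M).restrictScalars R) ≪≫ₗ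
    (QuotSMulTop.tensorQuotSMulTopEquivQuotSMulTop x (Localization S) M).symm ≪≫ₗ
    ((LocalizedModule.equivTensorProduct S (QuotSMulTop x M)).restrictScalars R).symm

theorem isWeaklyRegular_of_flat {rs : List R} (h : IsWeaklyRegular R rs) (M : Type*)
    [AddCommGroup M] [Module R M] [Module.Flat R M] : IsWeaklyRegular M rs :=
  ((TensorProduct.rid R M).isWeaklyRegular_congr rs).1 (h.isWeaklyRegular_lTensor (M₂ := M))

theorem flat_localizedModule (S : Submonoid R) (M : Type*) [AddCommGroup M] [Module R M]
    [Module.Flat (Localization S) (LocalizedModule S M)] : Module.Flat R (LocalizedModule S M) :=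
  have := IsLocalization.flat (Localization S) S
  .trans R (Localization S) _

theorem exists_pow_smul_eq_zero {M : Type*} [AddCommGroup M] [Module R M] {I : Ideal R}
    (hI : I.FG) {v : M}
    (hv : ∀ (p : Ideal R) [p.IsPrime], ¬ I ≤ p → LocalizedModule.mkLinearMap p.primeCompl M v = 0) :
    ∃ s, ∀ c ∈ I ^ s, c • v = 0 := by
  have hrad : I ≤ (R ∙ v).annihilator.radical := by
    rw [Ideal.radical_eq_sInf]
    refine le_sInf fun p ⟨hp, hprime⟩ => not_not.1 fun hIp => ?_
    obtain ⟨c, hc⟩ := (IsLocalizedModule.eq_zero_iff p.primeCompl _).1 (hv p hIp)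
    exact c.2 (hp ((Submodule.mem_annihilator_span_singleton v _).2 hc))
  obtain ⟨s, hs⟩ := Ideal.exists_pow_le_of_le_radical_of_fg hrad hI
  exact ⟨s, fun c hc => (Submodule.mem_annihilator_span_singleton v c).1 (hs hc)⟩

end LocalizedModules

section RegularSequences

open RingTheory.Sequence IsLocalRing

theorem free_of_isWeaklyRegular {R : Type*} [CommRing R] [IsLocalRing R] [IsNoetherianRing R]
    {rs : List R} (hrs : Ideal.ofList rs = maximalIdeal R) {M : Type*} [AddCommGroup M]
    [Module R M] [Module.Finite R M] (h : IsWeaklyRegular M rs) : Module.Free R M := by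
  induction hn : rs.length generalizing R M rs with
  | zero =>
    obtain rfl := List.eq_nil_of_length_eq_zero hn
    have hR : IsField R := isField_iff_maximalIdeal_eq.2 (by simpa using hrs.symm)
    let := hR.toField
    exact Module.Free.of_divisionRing R M
  | succ n ih =>
    obtain ⟨x, rs, rfl⟩ := List.exists_cons_of_length_eq_add_one hn
    have hx : x ∈ maximalIdeal R := hrs ▸ Ideal.subset_span List.mem_cons_self
    rw [isWeaklyRegular_cons_iff'] at h
    have : Nontrivial (R ⧸ Ideal.span {x}) :=
      Ideal.Quotient.nontrivial_iff.2 (Ideal.span_singleton_ne_top hx)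
    have : IsLocalRing (R ⧸ Ideal.span {x}) :=
      .of_surjective' _ Ideal.Quotient.mk_surjective
    have := Module.finitePresentation_of_finite R M
    have := Module.Finite.of_restrictScalars_finite R (R ⧸ Ideal.span {x}) (QuotSMulTop x M)
    have hmap : Ideal.ofList (rs.map (Ideal.Quotient.mk (Ideal.span {x}))) = maximalIdeal _ := by
      rw [← map_maximalIdeal_of_surjective _ Ideal.Quotient.mk_surjective, ← hrs,
        Ideal.ofList_cons, Ideal.map_sup, Ideal.map_quotient_self, bot_sup_eq, Ideal.map_ofList]
    rw [← Module.free_quotSMulTop_iff_free R M ?_ h.1]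
    · exact ih hmap h.2 (by simpa using hn)
    · rwa [jacobson_eq_maximalIdeal ⊥ bot_ne_top]

theorem free_localizedModule_of_isWeaklyRegular {R : Type*} [CommRing R] [IsNoetherianRing R]
    {rs : List R} [hp : (Ideal.ofList rs).IsPrime] {M : Type*} [AddCommGroup M] [Module R M]
    [Module.Finite R M] (h : IsWeaklyRegular M rs) :
    Module.Free (Localization (Ideal.ofList rs).primeCompl)
      (LocalizedModule (Ideal.ofList rs).primeCompl M) := by
  refine free_of_isWeaklyRegular (rs := rs.map (algebraMap R _)) ?_
    (h.of_isLocalizedModule _ (Ideal.ofList rs).primeCompl (LocalizedModule.mkLinearMap _ M))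
  rw [← Ideal.map_ofList, Localization.AtPrime.map_eq_maximalIdeal]

end RegularSequences

section LocalCohomology

open Limits Opposite RingTheory.Sequence

variable {R : Type u} [CommRing R] {I : Ideal R}

/-- The module `R / I ^ t`. -/
abbrev adicQuotient (I : Ideal R) (t : ℕ) : ModuleCat.{u} R :=
  ModuleCat.of R (R ⧸ I ^ t)

/-- The transition map `R / I ^ t' → R / I ^ t` of the `I`-adic tower. -/
abbrev adicQuotientMap (I : Ideal R) {t t' : ℕ} (h : t ≤ t') :
    adicQuotient I t' ⟶ adicQuotient I t :=
  ModuleCat.ofHom (Submodule.factor (Ideal.pow_le_pow_right h))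

/-- The ind-object `t ↦ Extⁱ(R / I ^ t, N)` is zero: every class dies at a later stage. This is how
the vanishing of local cohomology is used, since it passes along long exact sequences of `Ext`. -/
def ExtIndZero (I : Ideal R) (i : ℕ) (N : ModuleCat.{u} R) : Prop :=
  ∀ (t : ℕ) (α : Abelian.Ext (adicQuotient I t) N i), ∃ (t' : ℕ) (h : t ≤ t'),
    (Abelian.Ext.mk₀ (adicQuotientMap I h)).comp α (zero_add i) = 0

namespace ExtIndZero

theorem of_isZero_localCohomology {i : ℕ} {N : ModuleCat.{u} R}
    (h : IsZero ((localCohomology I i).obj N)) : ExtIndZero I i N := by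
  intro t α
  obtain ⟨a, ha, rfl⟩ :=
    (projectiveResolution (adicQuotient I t)).extMk_surjective α (i + 1) rfl
  let G := localCohomology.diagram (localCohomology.idealPowersDiagram I) i ⋙
    (evaluation _ _).obj N
  have hG : IsColimit (((evaluation _ _).obj N).mapCocone (colimit.cocone
      (localCohomology.diagram (localCohomology.idealPowersDiagram I) i))) :=
    isColimitOfPreserves _ (colimit.isColimit _)
  let e : G.obj (op (op t)) := derivedExtClass (projectiveResolution (adicQuotient I t)) a ha
  have := preservesSmallestFilteredColimits_of_preservesFilteredColimits
    (forget (ModuleCat.{u} R))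
  have : Subsingleton ((localCohomology I i).obj N) := ModuleCat.subsingleton_of_isZero h
  obtain ⟨k, f, g, hfg⟩ := Concrete.isColimit_exists_of_rep_eq G hG e (0 : G.obj (op (op t)))
    (Subsingleton.elim (α := (localCohomology I i).obj N) _ _)
  have ht : t ≤ k.unop.unop := f.unop.unop.down.down
  refine ⟨k.unop.unop, ht, ?_⟩
  obtain ⟨φ⟩ := nonempty_projectiveResolution_hom (adicQuotientMap I ht)
    (projectiveResolution _) (projectiveResolution _)
  rw [ProjectiveResolution.mk₀_comp_extMk _ _ _ _ φ]
  apply extMk_eq_zero_of_derivedExtClass_eq_zero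
  rw [← ext_map_derivedExtClass φ a ha]
  exact hfg.trans (map_zero (G.map g).hom)

theorem of_shortExact {S : ShortComplex (ModuleCat.{u} R)} (hS : S.ShortExact)
    {i : ℕ} (h₁ : ExtIndZero I (i + 1) S.X₁) (h₂ : ExtIndZero I i S.X₂) :
    ExtIndZero I i S.X₃ := by
  intro t α
  obtain ⟨t₁, ht₁, h⟩ := h₁ t (α.comp hS.extClass rfl)
  rw [← Abelian.Ext.comp_assoc _ _ _ (zero_add i) rfl (zero_add (i + 1))] at h
  obtain ⟨β, hβ⟩ := Abelian.Ext.covariant_sequence_exact₃ _ hS _ rfl h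
  obtain ⟨t₂, ht₂, h'⟩ := h₂ t₁ β
  refine ⟨t₂, ht₁.trans ht₂, ?_⟩
  have hcomp : adicQuotientMap I (ht₁.trans ht₂) =
      adicQuotientMap I ht₂ ≫ adicQuotientMap I ht₁ := by
    ext
    rfl
  rw [hcomp, ← Abelian.Ext.mk₀_comp_mk₀_assoc, ← hβ,
    ← Abelian.Ext.comp_assoc _ _ _ (zero_add i) (add_zero i) (by lia), h',
    Abelian.Ext.zero_comp]

theorem eq_zero_of_pow_smul {N : Type u} [AddCommGroup N] [Module R N]
    (h : ExtIndZero I 0 (ModuleCat.of R N)) {s : ℕ} {v : N} (hv : ∀ c ∈ I ^ s, c • v = 0) :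
    v = 0 := by
  let f : (R ⧸ I ^ s) →ₗ[R] N := Submodule.liftQ _ (LinearMap.toSpanSingleton R N v) hv
  obtain ⟨t, ht, h0⟩ := h s (Abelian.Ext.mk₀ (ModuleCat.ofHom f))
  rw [Abelian.Ext.mk₀_comp_mk₀, Abelian.Ext.mk₀_eq_zero_iff] at h0
  have hsmul : (1 : R) • v = 0 := congr(($h0).hom (Submodule.Quotient.mk (1 : R)))
  rwa [one_smul] at hsmul

theorem isSMulRegular {M : Type u} [AddCommGroup M] [Module R M] (hI : I.FG)
    (h : ExtIndZero I 0 (ModuleCat.of R M)) {x : R}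
    (hx : ∀ (p : Ideal R) [p.IsPrime], ¬ I ≤ p →
      IsSMulRegular (LocalizedModule p.primeCompl M) x) :
    IsSMulRegular M x := by
  rw [isSMulRegular_iff_right_eq_zero_of_smul]
  intro v hv
  obtain ⟨s, hs⟩ := exists_pow_smul_eq_zero hI fun p _ hp =>
    (hx p hp).right_eq_zero_of_smul <| by rw [← map_smul, hv, map_zero]
  exact h.eq_zero_of_pow_smul hs

theorem isWeaklyRegular {M : Type u} [AddCommGroup M] [Module R M] (hI : I.FG) {rs : List R}
    (h : ∀ i < rs.length, ExtIndZero I i (ModuleCat.of R M))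
    (hloc : ∀ (p : Ideal R) [p.IsPrime], ¬ I ≤ p →
      IsWeaklyRegular (LocalizedModule p.primeCompl M) rs) :
    IsWeaklyRegular M rs := by
  induction rs generalizing M with
  | nil => exact .nil R M
  | cons x rs ih =>
    simp only [isWeaklyRegular_cons_iff, List.length_cons] at h hloc ⊢
    have hx : IsSMulRegular M x :=
      (h 0 (by lia)).isSMulRegular hI fun p _ hp => (hloc p hp).1
    refine ⟨hx, ih (fun i hi => ?_) fun p _ hp => ?_⟩
    · exact .of_shortExact (IsSMulRegular.smulShortComplex_shortExact (M := .of R M) hx)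
        (h (i + 1) (by lia)) (h i (by lia))
    · exact ((quotSMulTopLocalizedModuleEquiv p.primeCompl x M).isWeaklyRegular_congr rs).1
        (hloc p hp).2

end ExtIndZero

/-- Regularity of the sequence is visible away from the maximal ideal, where `M` is flat, and the
vanishing of local cohomology carries it across the closed point. -/
theorem projective_of_extIndZero [IsNoetherianRing R] {M : Type u} [AddCommGroup M] [Module R M]
    [Module.Finite R M] {rs : List R} (hmax : (Ideal.ofList rs).IsMaximal)
    (hrs : IsWeaklyRegular R rs)
    (hflat : ∀ (p : Ideal R) [p.IsPrime], ¬ Ideal.ofList rs ≤ p →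
      Module.Flat R (LocalizedModule p.primeCompl M))
    (hExt : ∀ i < rs.length, ExtIndZero (Ideal.ofList rs) i (ModuleCat.of R M)) :
    Module.Projective R M := by
  have hM : IsWeaklyRegular M rs :=
    ExtIndZero.isWeaklyRegular (IsNoetherian.noetherian _) hExt fun p _ hp =>
      have := hflat p hp
      isWeaklyRegular_of_flat hrs _
  have : Module.Flat R M := by
    refine Module.flat_of_localized_maximal M fun p hp => ?_
    by_cases hle : Ideal.ofList rs ≤ p
    · obtain rfl := hmax.eq_of_le hp.ne_top hle
      have := free_localizedModule_of_isWeaklyRegular hM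
      exact flat_localizedModule _ M
    · exact hflat p hle
  have := Module.finitePresentation_of_finite R M
  exact Module.Flat.projective_of_finitePresentation

end LocalCohomology

section Horrocks

open RingTheory.Sequence

variable {σ : Type*}

theorem ofList_map_X {R : Type*} [CommSemiring R] (l : List σ) :
    Ideal.ofList (l.map (X : σ → MvPolynomial σ R)) = Ideal.span (X '' {i | i ∈ l}) :=
  congrArg Ideal.span <| by ext; simp

theorem isWeaklyRegular_map_X (R : Type*) [CommRing R] {l : List σ} (hl : l.Nodup) :
    IsWeaklyRegular (MvPolynomial σ R) (l.map (X : σ → MvPolynomial σ R)) := by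
  refine ⟨fun j hj => (isSMulRegular_quotient_iff_mem_of_smul_mem _ _).2 fun r hr => ?_⟩
  rw [List.length_map] at hj
  simp only [List.getElem_map, smul_eq_mul, Ideal.mul_top, ← List.map_take, ofList_map_X,
    mem_ideal_span_X_image] at hr ⊢
  intro m hm
  obtain ⟨i, hi, hne⟩ := hr (Finsupp.single l[j] 1 + m) (by
    rw [mem_support_iff] at hm ⊢
    rwa [coeff_X_mul])
  have hij : l[j] ≠ i := by
    rintro rfl
    obtain ⟨i, hi', heq⟩ := List.mem_take_iff_getElem.1 hi
    have := (hl.getElem_inj_iff).1 heq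
    lia
  exact ⟨i, hi, by simpa [hij] using hne⟩

theorem isMaximal_idealOfVars (σ k : Type*) [Field k] : (idealOfVars σ k).IsMaximal := by
  have : idealOfVars σ k = RingHom.ker (constantCoeff (σ := σ) (R := k)) := by
    ext p
    rw [RingHom.mem_ker, constantCoeff_eq, ← pow_one (idealOfVars σ k), mem_pow_idealOfVars_iff']
    simp [Finsupp.degree_eq_zero_iff]
  rw [this]
  exact RingHom.ker_isMaximal_of_surjective _ fun a => ⟨C a, constantCoeff_C _ a⟩

theorem ofList_map_X_finRange (d : ℕ) (R : Type*) [CommSemiring R] :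
    Ideal.ofList ((List.finRange d).map X) = idealOfVars (Fin d) R := by
  rw [ofList_map_X, idealOfVars, ← Set.image_univ]
  simp

theorem projective_of_isZero_localCohomology {k : Type u} [Field k] (d : ℕ) (M : Type u)
    [AddCommGroup M] [Module (MvPolynomial (Fin d) k) M] [Module.Finite (MvPolynomial (Fin d) k) M]
    (hvb : ∀ (p : Ideal (MvPolynomial (Fin d) k)) [p.IsPrime], ¬ idealOfVars (Fin d) k ≤ p →
      Module.Flat (Localization p.primeCompl) (LocalizedModule p.primeCompl M))
    (h : ∀ i < d, Limits.IsZero ((localCohomology (idealOfVars (Fin d) k) i).obj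
      (ModuleCat.of (MvPolynomial (Fin d) k) M))) :
    Module.Projective (MvPolynomial (Fin d) k) M := by
  have hmax := isMaximal_idealOfVars (Fin d) k
  rw [← ofList_map_X_finRange] at hvb h hmax
  refine projective_of_extIndZero hmax (isWeaklyRegular_map_X k (List.nodup_finRange d))
    (fun p _ hp => ?_) fun i hi => .of_isZero_localCohomology (h i (by simpa using hi))
  have := hvb p hp
  exact flat_localizedModule p.primeCompl M

theorem horrocks_criterion_general {k : Type u} [Field k] (d : ℕ) (M : Type u)
    [AddCommGroup M] [Module (MvPolynomial (Fin d) k) M] [Module.Finite (MvPolynomial (Fin d) k) M]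
    (hvb : ∀ (p : Ideal (MvPolynomial (Fin d) k)) [p.IsPrime], ¬ idealOfVars (Fin d) k ≤ p →
      Module.Flat (Localization p.primeCompl) (LocalizedModule p.primeCompl M))
    (h : ∀ i < d, Limits.IsZero ((localCohomology (idealOfVars (Fin d) k) i).obj
      (ModuleCat.of (MvPolynomial (Fin d) k) M))) :
    Module.Free (MvPolynomial (Fin d) k) M :=
  have := projective_of_isZero_localCohomology d M hvb h
  (allIdempotentsSplit_mvPolynomial (Fin d) k).free M

end Horrocks

/-- Horrocks: a vector bundle `E` on `P^n` (`n ≥ 2`) with vanishing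
intermediate cohomology `Hⁱ_*(E) = 0` for `1 ≤ i ≤ n−1` splits as a direct sum of
line bundles.  Encoded algebraically: `M = H⁰_*(E)` is a finitely generated module
over `R = k[z₀,…,z_n]`, free of finite rank after localizing at every prime not
containing the irrelevant ideal `m` (`E` is a vector bundle); being a saturated
module of sections means `H⁰_m(M) = H¹_m(M) = 0`, and `Hⁱ_*(E) ≅ H^{i+1}_m(M)`
vanishes for `1 ≤ i ≤ n−1`.  The conclusion is that `M` is free, i.e. the sheaf is a
direct sum of line bundles `⊕ O(c_j)`. -/
theorem horrocks_criterion (k : Type) [Field k] (n : ℕ) (hn : 2 ≤ n)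
    (M : Type) [AddCommGroup M] [Module (MvPolynomial (Fin (n + 1)) k) M]
    [Module.Finite (MvPolynomial (Fin (n + 1)) k) M]
    (hvb : ∀ (p : Ideal (MvPolynomial (Fin (n + 1)) k)) (hp : p.IsPrime),
      ¬ (Ideal.span (Set.range X) : Ideal (MvPolynomial (Fin (n + 1)) k)) ≤ p →
      Module.Free (Localization (@Ideal.primeCompl _ _ p hp))
        (LocalizedModule (@Ideal.primeCompl _ _ p hp) M))
    (hsat : ∀ i ≤ 1, Limits.IsZero
      ((localCohomology (Ideal.span (Set.range X)) i).obj
        (ModuleCat.of (MvPolynomial (Fin (n + 1)) k) M)))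
    (hvanish : ∀ i, 1 ≤ i → i ≤ n - 1 → Limits.IsZero
      ((localCohomology (Ideal.span (Set.range X)) (i + 1)).obj
        (ModuleCat.of (MvPolynomial (Fin (n + 1)) k) M))) :
    Module.Free (MvPolynomial (Fin (n + 1)) k) M :=
  horrocks_criterion_general (n + 1) M
    (fun p hp hmp => have := hvb p hp hmp; inferInstance)
    fun
    | 0, _ => hsat 0 zero_le_one
    | 1, _ => hsat 1 le_rfl
    | i + 2, hi => hvanish (i + 1) (by lia) (by lia)
end

section
/- A codimension 2 closed subscheme of P^n is standard determinantal if and only if it is arithmetically Cohen–Macaulay (Hilbert–Burch). -/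
open MvPolynomial

/-!
By Rees' theorem, `R ⧸ I` has a regular sequence of length `n - 1` in the irrelevant ideal `J` if
and only if `Ext i (R ⧸ J) (R ⧸ I) = 0` for `i < n - 1`; for `R` itself the vanishing holds for
`i < n + 1`.

If `I` is generated by the maximal minors of a `t × (t + 1)` matrix, then codimension two says that
these minors have no common factor, so by Cramer's rule and unique factorization
`0 → R ^ t → R ^ (t + 1) → I → 0` is exact, and the long exact sequences of `Ext` give the vanishing
for `R ⧸ I`.

Conversely, that vanishing propagates to `Ext i (R ⧸ J) K = 0` for `i < n + 1`, where `K` is the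
module of syzygies of homogeneous generators `f` of `I`. A minimal homogeneous generating family of
`K` is then a basis, as a nonzero module of relations would have depth `n + 2`, which exceeds
`dim R`. Comparing ranks, `K` has one basis vector less than there are generators, and the
maximal minors of the matrix of basis vectors are multiples of `f` by one factor. This factor is a
unit: the Koszul syzygies are combinations of the basis, so each minor divides a power of the
corresponding `f j`, and the `f j` have no common factor.
-/

namespace HilbertBurch

section RelPrimeFamily

/-- A family of elements is relatively prime if its only common divisors are units. For a family
generating an ideal of a factorial ring, this says that the ideal lies in no proper principal
ideal, that is, that it has codimension at least two. -/
def IsRelPrimeFamily {M ι : Type*} [Monoid M] (f : ι → M) : Prop :=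
  ∀ r, (∀ i, r ∣ f i) → IsUnit r

namespace IsRelPrimeFamily

variable {M ι : Type*} [CommMonoidWithZero M] {f : ι → M}

lemma exists_ne_zero [Nontrivial M] (hf : IsRelPrimeFamily f) : ∃ i, f i ≠ 0 := by
  by_contra! h
  exact not_isUnit_zero (hf 0 fun i => (h i).symm ▸ dvd_rfl)

variable [UniqueFactorizationMonoid M]

lemma dvd_of_forall_dvd_mul (hf : IsRelPrimeFamily f) {a b : M} (h : ∀ i, a ∣ f i * b) :
    a ∣ b := by
  nontriviality M
  by_cases ha : a = 0
  · obtain ⟨i, hi⟩ := hf.exists_ne_zero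
    have hfb : f i * b = 0 := by simpa only [ha, zero_dvd_iff] using h i
    exact (mul_eq_zero.mp hfb).resolve_left hi ▸ dvd_zero a
  · obtain ⟨a', b', c, hab, rfl, rfl⟩ := UniqueFactorizationMonoid.exists_reduced_factors a ha b
    have ha' : IsUnit a' := hf a' fun i => hab.dvd_of_dvd_mul_right <| by
      simpa only [mul_left_comm (f i), mul_dvd_mul_iff_left (left_ne_zero_of_mul ha)] using h i
    exact ha'.mul_right_dvd.mpr (dvd_mul_right c b')

lemma pow (hf : IsRelPrimeFamily f) (n : ℕ) : IsRelPrimeFamily (f ^ n) := by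
  intro r hr
  nontriviality M
  by_contra hru
  have hr0 : r ≠ 0 := by
    rintro rfl
    obtain ⟨i, hi⟩ := hf.exists_ne_zero
    exact pow_ne_zero n hi (zero_dvd_iff.mp (hr i))
  obtain ⟨p, hp, hpr⟩ := WfDvdMonoid.exists_irreducible_factor hru hr0
  exact hp.not_isUnit (hf p fun i => hp.prime.dvd_of_dvd_pow (hpr.trans (hr i)))

end IsRelPrimeFamily

end RelPrimeFamily

section Minors

open Matrix

variable {R : Type*} [CommRing R] {t : ℕ}

/-- The vector of maximal minors of a `t × (t + 1)` matrix, with the signs that make it orthogonal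
to the rows of the matrix. -/
def signedMinor (A : Matrix (Fin t) (Fin (t + 1)) R) (j : Fin (t + 1)) : R :=
  (-1) ^ (j : ℕ) * (A.submatrix id j.succAbove).det

variable (A : Matrix (Fin t) (Fin (t + 1)) R)

lemma signedMinor_associated_det (j : Fin (t + 1)) :
    Associated (signedMinor A j) (A.submatrix id j.succAbove).det :=
  associated_unit_mul_left _ _ (isUnit_one.neg.pow _)

lemma span_range_signedMinor :
    Ideal.span (Set.range (signedMinor A)) =
      Ideal.span {d | ∃ j : Fin (t + 1), d = (A.submatrix id j.succAbove).det} := by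
  apply le_antisymm <;> rw [Ideal.span_le]
  · rintro _ ⟨j, rfl⟩
    exact Ideal.mul_mem_left _ _ (Ideal.subset_span ⟨j, rfl⟩)
  · rintro _ ⟨j, rfl⟩
    exact Ideal.mem_of_dvd _ (signedMinor_associated_det A j).dvd
      (Ideal.subset_span (Set.mem_range_self j))

lemma mulVec_signedMinor : A *ᵥ signedMinor A = 0 := by
  funext i
  -- Expand along its first row the determinant of `A` with a second copy of row `i` put on top.
  have hdet : (A.submatrix (Fin.cons i id) id).det = 0 :=
    det_zero_of_row_eq (Fin.succ_ne_zero i).symm rfl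
  rw [det_succ_row_zero] at hdet
  rw [Pi.zero_apply, ← hdet]
  exact Fintype.sum_congr _ _ fun j => (mul_left_comm (A i j) _ _).trans (mul_assoc _ _ _).symm

lemma vecMul_dotProduct_signedMinor (v : Fin t → R) : (v ᵥ* A) ⬝ᵥ signedMinor A = 0 := by
  rw [← dotProduct_mulVec, mulVec_signedMinor, dotProduct_zero]

lemma vecMul_submatrix_succAbove (v : Fin t → R) (j : Fin (t + 1)) :
    v ᵥ* A.submatrix id j.succAbove = (v ᵥ* A) ∘ j.succAbove := rfl

variable {A}

lemma vecMul_injective_of_signedMinor_ne_zero [IsDomain R] {j : Fin (t + 1)}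
    (hj : signedMinor A j ≠ 0) : Function.Injective A.vecMulLinear := by
  have hdet : (A.submatrix id j.succAbove).det ≠ 0 :=
    (signedMinor_associated_det A j).ne_zero_iff.mp hj
  refine (injective_iff_map_eq_zero _).mpr fun v hv => eq_zero_of_vecMul_eq_zero hdet ?_
  rw [vecMul_submatrix_succAbove, ← vecMulLinear_apply, hv]
  rfl

lemma eq_zero_of_comp_succAbove_eq_zero [IsDomain R] {n : ℕ} {u f : Fin (n + 1) → R}
    {j : Fin (n + 1)} (hj : f j ≠ 0) (huf : u ⬝ᵥ f = 0) (hu : u ∘ j.succAbove = 0) : u = 0 := by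
  have hu' (i : Fin n) : u (j.succAbove i) = 0 := congrFun hu i
  have huj : u j = 0 := by
    simpa only [dotProduct, Fin.sum_univ_succAbove _ j, hu', zero_mul, Finset.sum_const_zero,
      add_zero, mul_eq_zero, hj, or_false] using huf
  exact funext ((Fin.forall_iff_succAbove j).mpr ⟨huj, hu'⟩)

/-- Cramer's rule, applied to `A` with its `j`-th column deleted. -/
lemma exists_vecMul_eq_signedMinor_smul [IsDomain R] {w : Fin (t + 1) → R}
    (hw : w ⬝ᵥ signedMinor A = 0) (j : Fin (t + 1)) :
    ∃ v : Fin t → R, v ᵥ* A = signedMinor A j • w := by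
  by_cases hj : signedMinor A j = 0
  · exact ⟨0, by rw [hj, zero_vecMul, zero_smul]⟩
  let B := A.submatrix id j.succAbove
  let v : Fin t → R := (-1 : R) ^ (j : ℕ) • ((w ∘ j.succAbove) ᵥ* B.adjugate)
  have hv : v ᵥ* B = signedMinor A j • (w ∘ j.succAbove) := by
    simp only [v, smul_vecMul, vecMul_vecMul, adjugate_mul, vecMul_smul, vecMul_one, signedMinor,
      B, smul_smul]
  refine ⟨v, sub_eq_zero.mp (eq_zero_of_comp_succAbove_eq_zero hj ?_ ?_)⟩
  · rw [sub_dotProduct, vecMul_dotProduct_signedMinor, smul_dotProduct, hw, smul_zero, sub_zero]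
  · exact sub_eq_zero.mpr hv

lemma exists_vecMul_eq_of_dotProduct_signedMinor_eq_zero [IsDomain R]
    [UniqueFactorizationMonoid R] (hA : IsRelPrimeFamily (signedMinor A)) {w : Fin (t + 1) → R}
    (hw : w ⬝ᵥ signedMinor A = 0) : ∃ v : Fin t → R, v ᵥ* A = w := by
  obtain ⟨j, hj⟩ := hA.exists_ne_zero
  choose v hv using exists_vecMul_eq_signedMinor_smul hw
  have hcomm (i : Fin (t + 1)) : signedMinor A i • v j = signedMinor A j • v i := by
    apply vecMul_injective_of_signedMinor_ne_zero hj
    simp only [vecMulLinear_apply, smul_vecMul, hv, smul_comm (signedMinor A i)]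
  have hdvd (l : Fin t) : signedMinor A j ∣ v j l :=
    hA.dvd_of_forall_dvd_mul fun i => ⟨v i l, congrFun (hcomm i) l⟩
  choose u hu using hdvd
  have hvu : v j = signedMinor A j • u := funext hu
  refine ⟨u, smul_right_injective _ hj ?_⟩
  simp only [← smul_vecMul, ← hvu, hv]

section Syzygies

variable {f : Fin (t + 1) → R} (hsyz : ∀ w : Fin (t + 1) → R, w ⬝ᵥ f = 0 → ∃ v, v ᵥ* A = w)
include hsyz

lemma exists_vecMul_eq_koszul (i j : Fin (t + 1)) :
    ∃ v : Fin t → R, v ᵥ* A = f j • Pi.single i 1 - f i • Pi.single j 1 :=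
  hsyz _ (by simp [sub_dotProduct, mul_comm])

lemma mul_signedMinor_comm (i j : Fin (t + 1)) :
    f i * signedMinor A j = f j * signedMinor A i := by
  obtain ⟨v, hv⟩ := exists_vecMul_eq_koszul hsyz i j
  have h := vecMul_dotProduct_signedMinor A v
  simp only [hv, sub_dotProduct, smul_dotProduct, single_one_dotProduct, smul_eq_mul] at h
  exact (sub_eq_zero.mp h).symm

/-- Solving for the Koszul syzygies that involve `j` gives a matrix `B` such that `B * A` without
its `j`-th column is the scalar matrix `f j`; take determinants. -/
lemma signedMinor_dvd_pow (j : Fin (t + 1)) : signedMinor A j ∣ f j ^ t := by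
  choose B hB using fun i => exists_vecMul_eq_koszul hsyz (j.succAbove i) j
  have hBA : of B * A.submatrix id j.succAbove = f j • (1 : Matrix (Fin t) (Fin t) R) := by
    ext a b
    change (B a ᵥ* A.submatrix id j.succAbove) b = _
    rw [vecMul_submatrix_succAbove, Function.comp_apply, hB]
    simp [Matrix.one_apply, Pi.single_apply, eq_comm]
  have hdet : (of B).det * (A.submatrix id j.succAbove).det = f j ^ t := by
    rw [← det_mul, hBA, det_smul, det_one, mul_one, Fintype.card_fin]
  exact (signedMinor_associated_det A j).dvd.trans (hdet ▸ dvd_mul_left _ _)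

lemma exists_isUnit_signedMinor_eq_smul [IsDomain R] [UniqueFactorizationMonoid R]
    (hf : IsRelPrimeFamily f) : ∃ u : R, IsUnit u ∧ signedMinor A = u • f := by
  obtain ⟨j, hj⟩ := hf.exists_ne_zero
  obtain ⟨u, hu⟩ : f j ∣ signedMinor A j :=
    hf.dvd_of_forall_dvd_mul fun i => ⟨_, mul_signedMinor_comm hsyz i j⟩
  have heq (i : Fin (t + 1)) : signedMinor A i = u * f i := by
    apply mul_left_cancel₀ hj
    rw [← mul_signedMinor_comm hsyz i j, hu]
    ring
  have hdvd (i : Fin (t + 1)) : u ∣ f i ^ t :=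
    (Dvd.intro _ (heq i).symm).trans (signedMinor_dvd_pow hsyz i)
  exact ⟨u, hf.pow t u hdvd, funext heq⟩

lemma span_range_signedMinor_eq [IsDomain R] [UniqueFactorizationMonoid R]
    (hf : IsRelPrimeFamily f) :
    Ideal.span (Set.range (signedMinor A)) = Ideal.span (Set.range f) := by
  obtain ⟨u, hu, hAf⟩ := exists_isUnit_signedMinor_eq_smul hsyz hf
  rw [hAf, Pi.smul_def, Set.range_smul]
  exact Submodule.span_smul_eq_of_isUnit _ u hu

end Syzygies

end Minors

section Depth

open CategoryTheory CategoryTheory.Abelian RingTheory.Sequence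

universe u

variable {R : Type u} [CommRing R] {J : Ideal R}

/-- The depth (or grade) of the module `M` with respect to the ideal `J` is at least `d`, expressed
through the vanishing of `Ext i (R ⧸ J) M` for `i < d`. By Rees' theorem this means that `J`
contains an `M`-regular sequence of length `d`, unless `J M = M`, when the depth is infinite. -/
def HasDepthGE (J : Ideal R) (M : Type u) [AddCommGroup M] [Module R M] (d : ℕ) : Prop :=
  ∀ i < d, Subsingleton (Ext (ModuleCat.of R (R ⧸ J)) (ModuleCat.of R M) i)

variable {M M₁ M₂ M₃ : Type u} [AddCommGroup M] [Module R M] [AddCommGroup M₁] [Module R M₁]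
  [AddCommGroup M₂] [Module R M₂] [AddCommGroup M₃] [Module R M₃]

lemma shortExact_of_exact {f : M₁ →ₗ[R] M₂} {g : M₂ →ₗ[R] M₃} (hf : Function.Injective f)
    (hg : Function.Surjective g) (hfg : Function.Exact f g) :
    (ModuleCat.shortComplexOfCompEqZero f g hfg.linearMap_comp_eq_zero).ShortExact :=
  ModuleCat.shortComplex_shortExact _ hfg hf hg

lemma exact_subtype_ker_rangeRestrict (g : M₁ →ₗ[R] M₂) :
    Function.Exact (LinearMap.ker g).subtype g.rangeRestrict := by
  rw [LinearMap.exact_iff, LinearMap.ker_rangeRestrict, Submodule.range_subtype]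

namespace HasDepthGE

lemma mono {d e : ℕ} (h : HasDepthGE J M e) (hde : d ≤ e) : HasDepthGE J M d :=
  fun i hi => h i (hi.trans_le hde)

section Exact

variable {f : M₁ →ₗ[R] M₂} {g : M₂ →ₗ[R] M₃} (hf : Function.Injective f)
  (hg : Function.Surjective g) (hfg : Function.Exact f g) {d : ℕ}
include hf hg hfg

lemma of_comp_eq_zero
    (hzero : ∀ i < d + 1, ∀ x : Ext (ModuleCat.of R (R ⧸ J)) (ModuleCat.of R M₁) i,
      x.comp (Ext.mk₀ (ModuleCat.ofHom f)) (add_zero i) = 0)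
    (h₃ : HasDepthGE J M₃ d) : HasDepthGE J M₁ (d + 1) := by
  have hS := shortExact_of_exact hf hg hfg
  intro i hi
  refine subsingleton_of_forall_eq 0 fun x => ?_
  have hx := hzero i hi x
  cases i with
  | zero =>
    have := hS.mono_f
    exact Ext.postcomp_mk₀_injective_of_mono _ (ModuleCat.ofHom f)
      (hx.trans (Ext.zero_comp _ _ _ _ (add_zero 0)).symm)
  | succ j =>
    obtain ⟨y, rfl⟩ := Ext.covariant_sequence_exact₁ _ hS x hx (n₀ := j) rfl
    rw [(h₃ j (Nat.lt_of_succ_lt_succ hi)).elim y 0, Ext.zero_comp]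

lemma of_exact_left (h₂ : HasDepthGE J M₂ (d + 1)) (h₃ : HasDepthGE J M₃ d) :
    HasDepthGE J M₁ (d + 1) :=
  of_comp_eq_zero hf hg hfg (fun i hi _ => (h₂ i hi).elim _ _) h₃

lemma of_exact_right (h₁ : HasDepthGE J M₁ (d + 1)) (h₂ : HasDepthGE J M₂ d) :
    HasDepthGE J M₃ d := by
  have hS := shortExact_of_exact hf hg hfg
  intro i hi
  refine subsingleton_of_forall_eq 0 fun x => ?_
  obtain ⟨y, rfl⟩ := Ext.covariant_sequence_exact₃ _ hS x (n₁ := i + 1) rfl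
    ((h₁ (i + 1) (Nat.succ_lt_succ hi)).elim _ _)
  rw [(h₂ i hi).elim y 0, Ext.zero_comp]

end Exact

lemma ker {g : M₁ →ₗ[R] M₂} {d : ℕ} (h : HasDepthGE J M₁ (d + 1))
    (hg : HasDepthGE J (LinearMap.range g) d) : HasDepthGE J (LinearMap.ker g) (d + 1) :=
  of_exact_left (LinearMap.ker g).injective_subtype g.surjective_rangeRestrict
    (exact_subtype_ker_rangeRestrict g) h hg

lemma ideal {I : Ideal R} {d : ℕ} (hR : HasDepthGE J R (d + 1)) (hI : HasDepthGE J (R ⧸ I) d) :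
    HasDepthGE J I (d + 1) :=
  of_exact_left I.injective_subtype I.mkQ_surjective (LinearMap.exact_subtype_mkQ I) hR hI

lemma quotient {I : Ideal R} {d : ℕ} (hI : HasDepthGE J I (d + 1)) (hR : HasDepthGE J R d) :
    HasDepthGE J (R ⧸ I) d :=
  of_exact_right I.injective_subtype I.mkQ_surjective (LinearMap.exact_subtype_mkQ I) hI hR

lemma pi {ι : Type} [Finite ι] {d : ℕ} (h : HasDepthGE J M d) : HasDepthGE J (ι → M) d := by
  classical
  cases nonempty_fintype ι
  intro i hi
  refine subsingleton_of_forall_eq 0 fun x => ?_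
  have hid : 𝟙 (ModuleCat.of R (ι → M)) = ∑ j : ι,
      ModuleCat.ofHom (LinearMap.proj j) ≫ ModuleCat.ofHom (LinearMap.single R (fun _ => M) j) := by
    ext v
    simp [ModuleCat.hom_sum]
  rw [← Ext.comp_mk₀_id x, hid, Ext.mk₀_sum, Ext.comp_sum]
  refine Finset.sum_eq_zero fun j _ => ?_
  rw [← Ext.mk₀_comp_mk₀, ← Ext.comp_assoc_of_second_deg_zero,
    (h i hi).elim (x.comp (Ext.mk₀ (ModuleCat.ofHom (LinearMap.proj j))) (add_zero i)) 0,
    Ext.zero_comp]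

section Rees

variable [IsNoetherianRing R] [Module.Finite R M]

lemma exists_isRegular {d : ℕ} (h : HasDepthGE J M d) (hJ : J • (⊤ : Submodule R M) ≠ ⊤) :
    ∃ rs : List R, rs.length = d ∧ (∀ r ∈ rs, r ∈ J) ∧ IsRegular M rs :=
  ModuleCat.exists_isRegular_of_exists_subsingleton_ext J d (ModuleCat.of R M) hJ.lt_top
    (ModuleCat.of R (R ⧸ J)) (by rw [Module.support_eq_zeroLocus, Ideal.annihilator_quotient]) h

lemma of_isRegular (hJ : J • (⊤ : Submodule R M) ≠ ⊤) {rs : List R} (hrs : ∀ r ∈ rs, r ∈ J)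
    (h : IsRegular M rs) : HasDepthGE J M rs.length :=
  ModuleCat.subsingleton_ext_of_exists_isRegular J (ModuleCat.of R (R ⧸ J))
    (by rw [Module.support_eq_zeroLocus, Ideal.annihilator_quotient]) (ModuleCat.of R M)
    hJ.lt_top rs hrs h

lemma ofList {rs : List R} (h : IsRegular M rs) : HasDepthGE (Ideal.ofList rs) M rs.length :=
  of_isRegular h.top_ne_smul.symm (fun _ hr => Ideal.subset_span hr) h

lemma iff_exists_isRegular (hJ : J • (⊤ : Submodule R M) ≠ ⊤) {d : ℕ} :
    HasDepthGE J M d ↔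
      ∃ rs : List R, rs.length = d ∧ (∀ r ∈ rs, r ∈ J) ∧ IsRegular M rs :=
  ⟨fun h => h.exists_isRegular hJ, fun ⟨_, hlen, hrs, h⟩ => hlen ▸ of_isRegular hJ hrs h⟩

end Rees

end HasDepthGE

lemma length_le_supportDim_of_isRegular [IsNoetherianRing R] {rs : List R}
    {M : Type*} [AddCommGroup M] [Module R M] [Module.Finite R M] (h : IsRegular M rs) :
    (rs.length : WithBot ℕ∞) ≤ Module.supportDim R M := by
  induction rs generalizing M with
  | nil =>
    have := h.nontrivial
    obtain ⟨d, hd⟩ := WithBot.ne_bot_iff_exists.mp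
      (Module.supportDim_ne_bot_of_nontrivial R M)
    rw [← hd]
    exact_mod_cast zero_le
  | cons r rs ih =>
    rw [isRegular_cons_iff] at h
    calc (((r :: rs).length : ℕ) : WithBot ℕ∞) = rs.length + 1 := by
          rw [List.length_cons, Nat.cast_succ]
      _ ≤ Module.supportDim R (QuotSMulTop r M) + 1 := by gcongr; exact ih h.2
      _ ≤ Module.supportDim R M :=
        Module.supportDim_quotSMulTop_succ_le_of_notMem_minimalPrimes
          fun _ => h.1.notMem_of_mem_minimalPrimes

lemma HasDepthGE.le_ringKrullDim [IsNoetherianRing R] [Module.Finite R M] {d : ℕ}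
    (h : HasDepthGE J M d) (hJ : J • (⊤ : Submodule R M) ≠ ⊤) : d ≤ ringKrullDim R := by
  obtain ⟨rs, rfl, -, hrs⟩ := h.exists_isRegular hJ
  exact (length_le_supportDim_of_isRegular hrs).trans (Module.supportDim_le_ringKrullDim R M)

lemma subsingleton_of_smul_top_eq_top [IsDomain R] [Module.Finite R M] [Module.IsTorsionFree R M]
    (hJ : J ≠ ⊤) (h : J • (⊤ : Submodule R M) = ⊤) : Subsingleton M := by
  obtain ⟨r, hr, hr0⟩ := Submodule.exists_sub_one_mem_and_smul_eq_zero_of_fg_of_le_smul J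
    (⊤ : Submodule R M) Module.Finite.fg_top h.ge
  have hr_ne : r ≠ 0 := by
    rintro rfl
    exact hJ ((Ideal.eq_top_iff_one J).mpr (by simpa only [zero_sub, neg_mem_iff] using hr))
  exact subsingleton_of_forall_eq 0 fun v => (smul_eq_zero_iff_right hr_ne).mp (hr0 v trivial)

lemma HasDepthGE.subsingleton [IsDomain R] [IsNoetherianRing R] [Module.Finite R M]
    [Module.IsTorsionFree R M] {d : ℕ} (h : HasDepthGE J M d) (hJ : J ≠ ⊤)
    (hd : ringKrullDim R < d) : Subsingleton M :=
  subsingleton_of_smul_top_eq_top hJ (not_imp_comm.mp h.le_ringKrullDim hd.not_ge)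

/-- Multiplication by an element of `J` kills `Ext i (R ⧸ J) -`, and `φ` is a linear combination
of such multiplications followed by maps between coordinates. -/
lemma comp_mk₀_eq_zero_of_forall_mem {ι κ : Type} [Finite ι] [Finite κ]
    {φ : (ι → R) →ₗ[R] (κ → R)} (hφ : ∀ v a, φ v a ∈ J) {i : ℕ}
    (x : Ext (ModuleCat.of R (R ⧸ J)) (ModuleCat.of R (ι → R)) i) :
    x.comp (Ext.mk₀ (ModuleCat.ofHom φ)) (add_zero i) = 0 := by
  classical
  cases nonempty_fintype ι
  cases nonempty_fintype κ
  let c (p : ι × κ) : R := φ (Pi.single p.1 1) p.2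
  let E (p : ι × κ) : ModuleCat.of R (ι → R) ⟶ ModuleCat.of R (κ → R) :=
    ModuleCat.ofHom (LinearMap.single R (fun _ => R) p.2 ∘ₗ LinearMap.proj p.1)
  have hsum : ModuleCat.ofHom φ = ∑ p, (c p • 𝟙 (ModuleCat.of R (ι → R))) ≫ E p := by
    ext i j
    simp [c, E, ModuleCat.hom_sum, Fintype.sum_prod_type, Pi.single_apply]
  have hzero (p : ι × κ) :
      x.comp (Ext.mk₀ (c p • 𝟙 (ModuleCat.of R (ι → R)))) (add_zero i) = 0 :=
    congr($(Ext.postcomp_smul_id_eq_zero_of_mem_annihilator (N := ModuleCat.of R (R ⧸ J)) (by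
      rw [Ideal.annihilator_quotient]; exact hφ _ _) i) x)
  rw [hsum, Ext.mk₀_sum, Ext.comp_sum]
  refine Finset.sum_eq_zero fun p _ => ?_
  rw [← Ext.mk₀_comp_mk₀, ← Ext.comp_assoc_of_second_deg_zero, hzero, Ext.zero_comp]

lemma hasProjectiveDimensionLE_quotient_of_isWeaklyRegular {rs : List R} (h : IsWeaklyRegular M rs)
    (d : ℕ) [HasProjectiveDimensionLE (ModuleCat.of R M) d] :
    HasProjectiveDimensionLE
      (ModuleCat.of R (M ⧸ Ideal.ofList rs • (⊤ : Submodule R M))) (d + rs.length) := by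
  induction rs generalizing M d with
  | nil =>
    exact ModuleCat.hasProjectiveDimensionLE_of_linearEquiv (M := ModuleCat.of R M)
      (Submodule.quotEquivOfEqBot _ (by rw [Ideal.ofList_nil, Submodule.bot_smul])).symm d
  | cons r rs ih =>
    rw [isWeaklyRegular_cons_iff] at h
    have hr : HasProjectiveDimensionLE (ModuleCat.of R (QuotSMulTop r M)) (d + 1) :=
      (IsSMulRegular.smulShortComplex_shortExact (M := ModuleCat.of R M) h.1)
        |>.hasProjectiveDimensionLT_X₃ _ ‹_›
          (hasProjectiveDimensionLT_of_ge (ModuleCat.of R M) (d + 1) (d + 1 + 1) (Nat.le_succ _))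
    have := ih h.2 (d + 1)
    rw [List.length_cons, Nat.add_comm rs.length 1, ← Nat.add_assoc]
    exact ModuleCat.hasProjectiveDimensionLE_of_linearEquiv
      (M := ModuleCat.of R (QuotSMulTop r M ⧸ Ideal.ofList rs • ⊤))
      (Submodule.quotOfListConsSMulTopEquivQuotSMulTopInner M r rs).symm _

lemma hasProjectiveDimensionLE_quotient_ofList {rs : List R} (h : IsWeaklyRegular R rs) :
    HasProjectiveDimensionLE (ModuleCat.of R (R ⧸ Ideal.ofList rs)) rs.length := by
  have := hasProjectiveDimensionLE_quotient_of_isWeaklyRegular h 0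
  rwa [smul_eq_mul, Ideal.mul_top, zero_add] at this

/-- The inclusion of the kernel factors the zero map on `Ext d (R ⧸ J) -` induced by a presentation
of the kernel, and the first factor is onto because `Ext (d + 1) (R ⧸ J) -` vanishes. -/
lemma comp_mk₀_subtype_ker_eq_zero [IsNoetherianRing R] {d : ℕ}
    [HasProjectiveDimensionLE (ModuleCat.of R (R ⧸ J)) d] {ι : Type} [Finite ι]
    {ψ : (ι → R) →ₗ[R] M} (hker : ∀ v, ψ v = 0 → ∀ a, v a ∈ J)
    (x : Ext (ModuleCat.of R (R ⧸ J)) (ModuleCat.of R (LinearMap.ker ψ)) d) :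
    x.comp (Ext.mk₀ (ModuleCat.ofHom (LinearMap.ker ψ).subtype)) (add_zero d) = 0 := by
  obtain ⟨q, φ, hφ⟩ := Module.Finite.exists_fin' R (LinearMap.ker ψ)
  obtain ⟨y, rfl⟩ := Ext.covariant_sequence_exact₃ _ (LinearMap.shortExact_shortComplexKer hφ) x
    (n₁ := d + 1) rfl (Ext.eq_zero_of_hasProjectiveDimensionLT _ (d + 1) le_rfl)
  rw [Ext.comp_assoc_of_second_deg_zero, Ext.mk₀_comp_mk₀]
  exact comp_mk₀_eq_zero_of_forall_mem (φ := (LinearMap.ker ψ).subtype ∘ₗ φ)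
    (fun v => hker _ (φ v).2) y

lemma HasDepthGE.ker_of_minimal [IsNoetherianRing R] {d : ℕ}
    [HasProjectiveDimensionLE (ModuleCat.of R (R ⧸ J)) d] (hR : HasDepthGE J R d) {ι : Type}
    [Finite ι] {ψ : (ι → R) →ₗ[R] M} (hψ : HasDepthGE J (LinearMap.range ψ) d)
    (hker : ∀ v, ψ v = 0 → ∀ a, v a ∈ J) : HasDepthGE J (LinearMap.ker ψ) (d + 1) := by
  refine of_comp_eq_zero (LinearMap.ker ψ).injective_subtype ψ.surjective_rangeRestrict
    (exact_subtype_ker_rangeRestrict ψ) (fun i hi x => ?_) hψ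
  rcases Nat.lt_succ_iff_lt_or_eq.mp hi with hi | rfl
  · exact (hR.pi i hi).elim _ _
  · exact comp_mk₀_subtype_ker_eq_zero hker x

/-- By minimality the kernel would have depth exceeding the dimension of `R`. -/
lemma injective_of_minimal_of_hasDepthGE [IsDomain R] [IsNoetherianRing R] {rs : List R}
    (hrs : IsRegular R rs) (hdim : ringKrullDim R ≤ rs.length) {ι : Type} [Finite ι]
    {ψ : (ι → R) →ₗ[R] M} (hψ : HasDepthGE (Ideal.ofList rs) (LinearMap.range ψ) rs.length)
    (hker : ∀ v, ψ v = 0 → ∀ a, v a ∈ Ideal.ofList rs) : Function.Injective ψ := by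
  have := hasProjectiveDimensionLE_quotient_ofList hrs.toIsWeaklyRegular
  have hJ : Ideal.ofList rs ≠ ⊤ := by
    simpa only [smul_eq_mul, Ideal.mul_top] using hrs.top_ne_smul.symm
  have hlt : ringKrullDim R < ((rs.length + 1 : ℕ) : WithBot ℕ∞) :=
    hdim.trans_lt (Nat.cast_lt.mpr (Nat.lt_succ_self _))
  have := (HasDepthGE.ker_of_minimal (.ofList hrs) hψ hker).subsingleton hJ hlt
  rw [← LinearMap.ker_eq_bot]
  exact Submodule.subsingleton_iff_eq_bot.mp this

end Depth

section Quotient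

open RingTheory.Sequence

variable {R : Type*} [CommRing R] {I J : Ideal R}

lemma isRegular_map_mk_iff (I : Ideal R) (rs : List R) :
    IsRegular (R ⧸ I) (rs.map (Ideal.Quotient.mk I)) ↔ IsRegular (R ⧸ I) rs := by
  refine (AddEquiv.isRegular_congr (e := AddEquiv.refl (R ⧸ I)) ?_).symm
  rw [List.forall₂_map_right_iff]
  refine List.forall₂_same.mpr fun r _ x => ?_
  obtain ⟨x, rfl⟩ := Ideal.Quotient.mk_surjective x
  rfl

lemma smul_top_quotient_ne_top (hIJ : I ≤ J) (hJ : J ≠ ⊤) :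
    J • (⊤ : Submodule R (R ⧸ I)) ≠ ⊤ := by
  intro h
  have hmap : J.map (Ideal.Quotient.mk I) = ⊤ := by
    rw [← Ideal.Quotient.algebraMap_eq, ← Submodule.restrictScalars_inj R, ← Ideal.smul_top_eq_map,
      h, Submodule.restrictScalars_top]
  rw [← Ideal.comap_map_mk hIJ, hmap, Ideal.comap_top] at hJ
  exact hJ rfl

end Quotient

section Syzygies

open Matrix LinearMap

universe u

variable {R : Type u} [CommRing R] {J : Ideal R}

lemma HasDepthGE.ker_linearCombination {s d : ℕ} {f : Fin s → R} (hR : HasDepthGE J R (d + 2))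
    (hf : HasDepthGE J (R ⧸ Ideal.span (Set.range f)) d) :
    HasDepthGE J (LinearMap.ker (Fintype.linearCombination R f)) (d + 2) := by
  refine hR.pi.ker ?_
  rw [Fintype.range_linearCombination]
  exact (hR.mono (d + 1).le_succ).ideal hf

variable [IsDomain R]

lemma HasDepthGE.quotient_span_signedMinor [UniqueFactorizationMonoid R] {t d : ℕ}
    {A : Matrix (Fin t) (Fin (t + 1)) R} (hA : IsRelPrimeFamily (signedMinor A))
    (hR : HasDepthGE J R (d + 2)) :
    HasDepthGE J (R ⧸ Ideal.span (Set.range (signedMinor A))) d := by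
  obtain ⟨j, hj⟩ := hA.exists_ne_zero
  let g := Fintype.linearCombination R (signedMinor A)
  have hexact : Function.Exact A.vecMulLinear g.rangeRestrict := by
    rw [LinearMap.exact_iff, ker_rangeRestrict]
    refine Submodule.ext fun w => ⟨exists_vecMul_eq_of_dotProduct_signedMinor_eq_zero hA, ?_⟩
    rintro ⟨v, rfl⟩
    exact vecMul_dotProduct_signedMinor A v
  have hrange : HasDepthGE J (range g) (d + 1) :=
    of_exact_right (vecMul_injective_of_signedMinor_ne_zero hj) g.surjective_rangeRestrict
      hexact hR.pi (hR.mono (d + 1).le_succ).pi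
  rw [Fintype.range_linearCombination] at hrange
  exact hrange.quotient (hR.mono (Nat.le_add_right d 2))

lemma finrank_ideal_eq_one [IsNoetherianRing R] {I : Ideal R} (hI : I ≠ ⊥) :
    Module.finrank R I = 1 := by
  have : Nontrivial I := Submodule.nontrivial_iff_ne_bot.mpr hI
  refine le_antisymm ?_ (Module.finrank_pos (R := R) (M := I))
  exact (Submodule.finrank_le I).trans_eq (Module.finrank_self R)

lemma eq_add_one_of_injective_linearCombination [IsNoetherianRing R] {s t : ℕ} {f : Fin s → R}
    (hf : ∃ i, f i ≠ 0) {w : Fin t → Fin s → R}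
    (hw : Submodule.span R (Set.range w) = ker (Fintype.linearCombination R f))
    (hinj : Function.Injective (Fintype.linearCombination R w)) : s = t + 1 := by
  have hrange : range (Fintype.linearCombination R f) ≠ ⊥ := by
    rw [Fintype.range_linearCombination, Ne, Submodule.span_eq_bot, Set.forall_mem_range]
    exact not_forall.mpr hf
  have hker : Module.finrank R (ker (Fintype.linearCombination R f)) = t := by
    rw [← hw, ← Fintype.range_linearCombination, finrank_range_of_inj hinj, Module.finrank_fin_fun]
  have hsum := Submodule.finrank_quotient_add_finrank (ker (Fintype.linearCombination R f))
  rw [(Fintype.linearCombination R f).quotKerEquivRange.finrank_eq, hker,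
    finrank_ideal_eq_one hrange, Module.finrank_fin_fun] at hsum
  rw [← hsum, Nat.add_comm]

lemma span_range_signedMinor_of_eq_span [UniqueFactorizationMonoid R] {t : ℕ}
    {f : Fin (t + 1) → R} (hf : IsRelPrimeFamily f) {w : Fin t → Fin (t + 1) → R}
    (hw : Submodule.span R (Set.range w) = ker (Fintype.linearCombination R f)) :
    Ideal.span (Set.range (signedMinor (of w))) = Ideal.span (Set.range f) := by
  refine span_range_signedMinor_eq (fun v hv => ?_) hf
  have hmem : v ∈ ker (Fintype.linearCombination R f) := hv
  rwa [← hw, ← of_row w, ← range_vecMulLinear] at hmem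

end Syzygies

section PolynomialRing

open RingTheory.Sequence

variable {σ k : Type*}

section Depth

lemma mem_idealOfVars_iff_constantCoeff_eq_zero [CommSemiring k] {p : MvPolynomial σ k} :
    p ∈ idealOfVars σ k ↔ constantCoeff p = 0 := by
  simpa [constantCoeff_eq, Finsupp.degree_eq_zero_iff] using mem_pow_idealOfVars_iff' 1 p

variable [CommRing k]

lemma idealOfVars_ne_top [Nontrivial k] : idealOfVars σ k ≠ ⊤ := by
  simp [Ideal.ne_top_iff_one, mem_idealOfVars_iff_constantCoeff_eq_zero]

lemma isSMulRegular_quotient_span_X_image {s : Set σ} {i : σ} (hi : i ∉ s) :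
    IsSMulRegular (MvPolynomial σ k ⧸ (Ideal.span (X '' s) : Ideal (MvPolynomial σ k)))
      (X i : MvPolynomial σ k) := by
  rw [isSMulRegular_quotient_iff_mem_of_smul_mem]
  intro p hp
  rw [mem_ideal_span_X_image] at hp ⊢
  intro m hm
  have hmem : Finsupp.single i 1 + m ∈ (X i * p).support := by
    rwa [mem_support_iff, coeff_X_mul, ← mem_support_iff]
  obtain ⟨j, hj, hmj⟩ := hp _ hmem
  have hij : i ≠ j := fun h => hi (h ▸ hj)
  exact ⟨j, hj, by simpa [Finsupp.single_apply, hij] using hmj⟩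

lemma isWeaklyRegular_map_X {l : List σ} (hl : l.Nodup) :
    IsWeaklyRegular (MvPolynomial σ k) (l.map (X : σ → MvPolynomial σ k)) := by
  constructor
  intro i hi
  have hspan : (Ideal.ofList ((l.map X).take i) : Ideal (MvPolynomial σ k)) =
      Ideal.span (X '' {j | j ∈ l.take i}) := by
    rw [← List.map_take, Ideal.ofList]
    congr 1
    ext p
    simp only [List.mem_map, Set.mem_image, Set.mem_ofPred_eq]
  rw [smul_eq_mul, Ideal.mul_top, hspan, List.getElem_map]
  refine isSMulRegular_quotient_span_X_image fun hmem => ?_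
  obtain ⟨j, hj, hji⟩ := List.mem_take_iff_getElem.mp hmem
  exact (lt_min_iff.mp hj).1.ne (hl.getElem_inj_iff.mp hji)

variable [Fintype σ]

lemma ofList_map_X_toList :
    (Ideal.ofList (Finset.univ.toList.map X) : Ideal (MvPolynomial σ k)) = idealOfVars σ k := by
  rw [Ideal.ofList, idealOfVars]
  congr 1
  ext p
  simp

lemma isRegular_map_X_toList [Nontrivial k] :
    IsRegular (MvPolynomial σ k) (Finset.univ.toList.map (X : σ → MvPolynomial σ k)) := by
  refine ⟨isWeaklyRegular_map_X (Finset.nodup_toList _), ?_⟩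
  rw [ofList_map_X_toList, smul_eq_mul, Ideal.mul_top]
  exact idealOfVars_ne_top.symm

end Depth

section Dimension

variable [Finite σ]

lemma card_le_height_of_isMaximal [CommRing k] [IsNoetherianRing k] [IsJacobsonRing k]
    (M : Ideal (MvPolynomial σ k)) [M.IsMaximal] : (Nat.card σ : ℕ∞) ≤ M.height := by
  induction σ using Finite.induction_empty_option with
  | of_equiv e ih =>
    let e' := (renameEquiv k e).toRingEquiv
    have := Ideal.comap_isMaximal_of_equiv e' (p := M)
    rw [← Nat.card_congr e, ← RingEquiv.height_comap e' M]
    exact ih _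
  | h_empty => simp
  | @h_option σ _ ih =>
    let e := (optionEquivLeft k σ).symm.toRingEquiv
    let P : Ideal (Polynomial (MvPolynomial σ k)) := M.comap e
    have : P.IsMaximal := Ideal.comap_isMaximal_of_equiv e
    have : (P.under (MvPolynomial σ k)).IsMaximal :=
      Polynomial.isMaximal_comap_C_of_isJacobsonRing P
    have : P.LiesOver (P.under (MvPolynomial σ k)) := ⟨rfl⟩
    have h : P.height = M.height := RingEquiv.height_comap e M
    rw [← h, Polynomial.height_eq_height_add_one (P.under (MvPolynomial σ k)) P, Finite.card_option,
      Nat.cast_add, Nat.cast_one]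
    gcongr
    exact ih _

lemma isRelPrimeFamily_of_ringKrullDim_lt [Field k] {ι : Type*} {f : ι → MvPolynomial σ k}
    (hf : ringKrullDim (MvPolynomial σ k ⧸ Ideal.span (Set.range f)) + 1 < Nat.card σ) :
    IsRelPrimeFamily f := by
  intro r hr
  by_contra hru
  have hfr : Ideal.span (Set.range f) ≤ Ideal.span {r} := by
    rw [Ideal.span_le, Set.range_subset_iff]
    exact fun i => Ideal.mem_span_singleton.mpr (hr i)
  obtain ⟨M, hM, hrM⟩ := exists_max_ideal_of_mem_nonunits hru
  refine hf.not_ge ?_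
  calc (Nat.card σ : WithBot ℕ∞) ≤ M.height := by exact_mod_cast card_le_height_of_isMaximal M
    _ ≤ ringKrullDim (MvPolynomial σ k ⧸ Ideal.span {r}) + 1 :=
      Ideal.height_le_ringKrullDim_quotient_add_one hrM
    _ ≤ ringKrullDim (MvPolynomial σ k ⧸ Ideal.span (Set.range f)) + 1 := by
      gcongr
      exact ringKrullDim_le_of_surjective (Ideal.Quotient.factor hfr)
        (Ideal.Quotient.factor_surjective hfr)

end Dimension

lemma le_idealOfVars_of_isHomogeneous [Field k] {I : Ideal (MvPolynomial σ k)} (hI : I ≠ ⊤)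
    {S : Set (MvPolynomial σ k)} (hS : ∀ s ∈ S, ∃ d, s.IsHomogeneous d)
    (hIS : I = Ideal.span S) : I ≤ idealOfVars σ k := by
  rw [hIS, Ideal.span_le]
  intro s hs
  obtain ⟨d, hd⟩ := hS s hs
  rw [SetLike.mem_coe, mem_idealOfVars_iff_constantCoeff_eq_zero, constantCoeff_eq]
  by_contra h0
  have hd0 : s.IsHomogeneous 0 := by simpa [← hd h0] using hd
  rw [← totalDegree_zero_iff_isHomogeneous, totalDegree_eq_zero_iff_eq_C] at hd0
  refine hI (Ideal.eq_top_of_isUnit_mem _ (hIS ▸ Ideal.subset_span hs) ?_)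
  rw [hd0]
  exact (IsUnit.mk0 _ h0).map C

end PolynomialRing

section GradedVectors

open Matrix Submodule

lemma exists_fin_span_range_eq_span {R M : Type*} [Semiring R] [AddCommMonoid M] [Module R M]
    [IsNoetherian R M] (S : Set M) :
    ∃ (t : ℕ) (w : Fin t → M), (∀ i, w i ∈ S) ∧ span R (Set.range w) = span R S := by
  obtain ⟨T, hT, hTS⟩ :=
    (fg_span_iff_fg_span_finset_subset S).mp (IsNoetherian.noetherian (span R S))
  refine ⟨T.card, fun i => T.equivFin.symm i, fun i => hT (T.equivFin.symm i).2, ?_⟩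
  rw [hTS]
  congr 1
  exact (T.equivFin.symm.surjective.range_comp _).trans Subtype.range_coe

lemma span_range_comp_succAbove {R M : Type*} [Semiring R] [AddCommMonoid M] [Module R M] {t : ℕ}
    {w : Fin (t + 1) → M} {i : Fin (t + 1)} (hi : w i ∈ span R (Set.range (w ∘ i.succAbove))) :
    span R (Set.range (w ∘ i.succAbove)) = span R (Set.range w) := by
  refine le_antisymm (span_mono (Set.range_comp_subset_range _ _)) (span_le.mpr ?_)
  rw [Set.range_subset_iff, Fin.forall_iff_succAbove i]
  exact ⟨hi, fun j => subset_span ⟨j, rfl⟩⟩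

variable {σ k ι : Type*}

section CommSemiring

variable [CommSemiring k]

lemma homogeneousComponent_mul_of_isHomogeneous (p : MvPolynomial σ k) {q : MvPolynomial σ k}
    {e : ℕ} (hq : q.IsHomogeneous e) (m : ℕ) :
    homogeneousComponent m (p * q) =
      (if e ≤ m then homogeneousComponent (m - e) p else 0) * q := by
  let _ : GradedAlgebra (homogeneousSubmodule σ k) := gradedAlgebra
  have hdecompose (r : MvPolynomial σ k) (i : ℕ) :
      (DirectSum.decompose (homogeneousSubmodule σ k) r i : MvPolynomial σ k) =
        homogeneousComponent i r := decomposition.decompose'_apply r i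
  have h := DirectSum.coe_decompose_mul_of_right_mem (homogeneousSubmodule σ k) (a := p) m hq
  rwa [hdecompose, hdecompose, ← zero_mul q, ← ite_mul] at h

/-- A vector is homogeneous of degree `d` in the graded free module whose basis vectors have
degrees `e`. The zero alternative and the bound `e j ≤ d` keep the truncated subtraction from
admitting nonzero constants as entries of negative degree. -/
def IsHomogeneousVec (e : ι → ℕ) (d : ℕ) (w : ι → MvPolynomial σ k) : Prop :=
  ∀ j, w j = 0 ∨ ((w j).IsHomogeneous (d - e j) ∧ e j ≤ d)

/-- The part of degree `d` of a vector in the graded free module whose basis vectors have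
degrees `e`. -/
noncomputable def vecComponent (e : ι → ℕ) (d : ℕ) :
    (ι → MvPolynomial σ k) →ₗ[k] (ι → MvPolynomial σ k) :=
  LinearMap.pi fun j =>
    (if e j ≤ d then homogeneousComponent (d - e j) else 0) ∘ₗ LinearMap.proj j

lemma vecComponent_apply (e : ι → ℕ) (d : ℕ) (w : ι → MvPolynomial σ k) (j : ι) :
    vecComponent e d w j = if e j ≤ d then homogeneousComponent (d - e j) (w j) else 0 := by
  rw [vecComponent, LinearMap.pi_apply]
  split_ifs <;> rfl

lemma isHomogeneousVec_vecComponent (e : ι → ℕ) (d : ℕ) (w : ι → MvPolynomial σ k) :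
    IsHomogeneousVec e d (vecComponent e d w) := by
  intro j
  rw [vecComponent_apply]
  split_ifs with h
  · exact Or.inr ⟨homogeneousComponent_isHomogeneous _ _, h⟩
  · exact Or.inl rfl

lemma vecComponent_dotProduct [Fintype ι] {e : ι → ℕ} {f : ι → MvPolynomial σ k}
    (hf : ∀ j, (f j).IsHomogeneous (e j)) (d : ℕ) (w : ι → MvPolynomial σ k) :
    vecComponent e d w ⬝ᵥ f = homogeneousComponent d (w ⬝ᵥ f) := by
  simp only [dotProduct, map_sum, vecComponent_apply,
    homogeneousComponent_mul_of_isHomogeneous _ (hf _)]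

lemma IsHomogeneousVec.vecComponent_smul {e : ι → ℕ} {d : ℕ} {w : ι → MvPolynomial σ k}
    (hw : IsHomogeneousVec e d w) (m : ℕ) (c : MvPolynomial σ k) :
    vecComponent e m (c • w) = (if d ≤ m then homogeneousComponent (m - d) c else 0) • w := by
  funext j
  rw [vecComponent_apply, Pi.smul_apply, Pi.smul_apply, smul_eq_mul, smul_eq_mul]
  obtain hj | ⟨hj, hle⟩ := hw j
  · simp only [hj, mul_zero, map_zero, ite_self]
  have hcond : (e j ≤ m ∧ d - e j ≤ m - e j) ↔ d ≤ m := by omega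
  have hdeg : m - e j - (d - e j) = m - d := by omega
  rw [homogeneousComponent_mul_of_isHomogeneous c hj, hdeg]
  simp only [← hcond, ite_and, ite_mul, zero_mul]

lemma sum_vecComponent {e : ι → ℕ} {w : ι → MvPolynomial σ k} {D : ℕ}
    (hD : ∀ j, e j + (w j).totalDegree < D) : ∑ d ∈ Finset.range D, vecComponent e d w = w := by
  funext j
  have hj := hD j
  calc (∑ d ∈ Finset.range D, vecComponent e d w) j
      = ∑ d ∈ Finset.range D with e j ≤ d, homogeneousComponent (d - e j) (w j) := by
        simp only [Finset.sum_apply, vecComponent_apply, Finset.sum_filter]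
    _ = ∑ m ∈ Finset.range (D - e j), homogeneousComponent m (w j) := by
        rw [show {d ∈ Finset.range D | e j ≤ d} = Finset.Ico (e j) D by ext; simp [and_comm],
          Finset.sum_Ico_eq_sum_range]
        simp only [Nat.add_sub_cancel_left]
    _ = ∑ m ∈ Finset.range ((w j).totalDegree + 1), homogeneousComponent m (w j) := by
        refine (Finset.sum_subset (Finset.range_mono (by omega)) fun m _ hm => ?_).symm
        exact homogeneousComponent_eq_zero _ _ (by simpa using hm)
    _ = w j := sum_homogeneousComponent _

lemma mem_span_range_vecComponent [Finite ι] (e : ι → ℕ) (w : ι → MvPolynomial σ k) :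
    w ∈ span (MvPolynomial σ k) (Set.range fun d => vecComponent e d w) := by
  obtain ⟨D, hD⟩ := (Set.finite_range fun j => e j + (w j).totalDegree).bddAbove
  have hsum := sum_vecComponent (D := D + 1) fun j => Nat.lt_succ_of_le (hD ⟨j, rfl⟩)
  exact hsum ▸ sum_mem fun d _ => subset_span ⟨d, by rw [hsum]⟩

/-- A matrix is homogeneous with column degrees `a` and row degrees `b` if its entries are forms of
degrees `a j - b i`, that is, if it defines a graded homomorphism of degree zero between graded free
modules. As for `IsHomogeneousVec`, entries of negative degree have to be zero. -/
def IsHomogeneousMatrix {κ : Type*} (a : ι → ℕ) (b : κ → ℕ)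
    (A : Matrix κ ι (MvPolynomial σ k)) : Prop :=
  ∀ i j, A i j = 0 ∨ ((A i j).IsHomogeneous (a j - b i) ∧ b i ≤ a j)

lemma exists_isHomogeneousMatrix_of_isHomogeneousVec {κ : Type*} [Finite κ] {e : ι → ℕ} {m : κ → ℕ}
    {w : κ → ι → MvPolynomial σ k} (hw : ∀ i, IsHomogeneousVec e (m i) (w i)) :
    ∃ (a : ι → ℕ) (b : κ → ℕ), IsHomogeneousMatrix a b (of w) := by
  obtain ⟨M, hM⟩ := (Set.finite_range m).bddAbove
  refine ⟨fun j => M - e j, fun i => M - m i, fun i j => (hw i j).imp_right ?_⟩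
  rintro ⟨hij, hle⟩
  have hmi : m i ≤ M := hM ⟨i, rfl⟩
  rw [show M - e j - (M - m i) = m i - e j by omega]
  exact ⟨hij, Nat.sub_le_sub_left hle M⟩

end CommSemiring

lemma exists_span_isHomogeneousVec [CommRing k] [IsNoetherianRing k] [Finite σ] [Finite ι]
    (e : ι → ℕ) {K : Submodule (MvPolynomial σ k) (ι → MvPolynomial σ k)}
    (hK : ∀ w ∈ K, ∀ d, vecComponent e d w ∈ K) :
    ∃ (t : ℕ) (w : Fin t → ι → MvPolynomial σ k),
      (∀ i, ∃ d, IsHomogeneousVec e d (w i)) ∧ span _ (Set.range w) = K := by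
  obtain ⟨t, w, hw, hspan⟩ := exists_fin_span_range_eq_span (R := MvPolynomial σ k)
    {w | w ∈ K ∧ ∃ d, IsHomogeneousVec e d w}
  refine ⟨t, w, fun i => (hw i).2, hspan.trans (le_antisymm (span_le.mpr fun w hw => hw.1) ?_)⟩
  refine fun w hw => span_mono ?_ (mem_span_range_vecComponent e w)
  exact Set.range_subset_iff.mpr fun d => ⟨hK w hw d, d, isHomogeneousVec_vecComponent e d w⟩

/-- The component of the relation in degree `d i` has the nonzero constant term of `c i` as
coefficient of `w i`. -/
lemma mem_span_comp_succAbove_of_sum_smul_eq_zero [Field k] {e : ι → ℕ} {t : ℕ}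
    {w : Fin (t + 1) → ι → MvPolynomial σ k} {d : Fin (t + 1) → ℕ}
    (hw : ∀ i, IsHomogeneousVec e (d i) (w i)) {c : Fin (t + 1) → MvPolynomial σ k}
    (hc : ∑ i, c i • w i = 0) {i : Fin (t + 1)} (hci : c i ∉ idealOfVars σ k) :
    w i ∈ span (MvPolynomial σ k) (Set.range (w ∘ i.succAbove)) := by
  rw [mem_idealOfVars_iff_constantCoeff_eq_zero, constantCoeff_eq] at hci
  have hrel := congrArg (vecComponent e (d i)) hc
  simp only [map_sum, map_zero, (hw _).vecComponent_smul] at hrel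
  rw [Fin.sum_univ_succAbove _ i, if_pos le_rfl, Nat.sub_self, homogeneousComponent_zero] at hrel
  rw [← smul_mem_iff_of_isUnit _ ((IsUnit.mk0 _ hci).map C), eq_neg_of_add_eq_zero_left hrel]
  exact neg_mem (sum_mem fun j _ => smul_mem _ _ (subset_span ⟨j, rfl⟩))

lemma exists_minimal_span_isHomogeneousVec [Field k] [Finite σ] [Finite ι] (e : ι → ℕ)
    {K : Submodule (MvPolynomial σ k) (ι → MvPolynomial σ k)}
    (hK : ∀ w ∈ K, ∀ d, vecComponent e d w ∈ K) :
    ∃ (t : ℕ) (w : Fin t → ι → MvPolynomial σ k) (d : Fin t → ℕ),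
      (∀ i, IsHomogeneousVec e (d i) (w i)) ∧ span _ (Set.range w) = K ∧
      ∀ c : Fin t → MvPolynomial σ k, ∑ i, c i • w i = 0 → ∀ i, c i ∈ idealOfVars σ k := by
  classical
  have hex := exists_span_isHomogeneousVec e hK
  obtain ⟨w, hw, hspan⟩ := Nat.find_spec hex
  have hmin := fun m => Nat.find_min (m := m) hex
  generalize Nat.find hex = t at w hw hspan hmin
  choose d hd using hw
  refine ⟨t, w, d, hd, hspan, fun c hc i => ?_⟩
  by_contra hci
  obtain ⟨t, rfl⟩ := Nat.exists_eq_succ_of_ne_zero i.pos.ne'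
  exact hmin t t.lt_succ_self ⟨w ∘ i.succAbove, fun j => ⟨_, hd _⟩,
    (span_range_comp_succAbove (mem_span_comp_succAbove_of_sum_smul_eq_zero hd hc hci)).trans
      hspan⟩

end GradedVectors

section HomogeneousMatrices

variable {σ k : Type*} [Finite σ] [Field k]

lemma hasDepthGE_idealOfVars :
    HasDepthGE (idealOfVars σ k) (MvPolynomial σ k) (Nat.card σ) := by
  have := Fintype.ofFinite σ
  have h := HasDepthGE.ofList (isRegular_map_X_toList (σ := σ) (k := k))
  rwa [ofList_map_X_toList, List.length_map, Finset.length_toList, Finset.card_univ,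
    ← Nat.card_eq_fintype_card] at h

lemma injective_of_forall_mem_idealOfVars {ι : Type} [Finite ι] {M : Type _} [AddCommGroup M]
    [Module (MvPolynomial σ k) M] {ψ : (ι → MvPolynomial σ k) →ₗ[MvPolynomial σ k] M}
    (hψ : HasDepthGE (idealOfVars σ k) (LinearMap.range ψ) (Nat.card σ))
    (hker : ∀ v, ψ v = 0 → ∀ a, v a ∈ idealOfVars σ k) : Function.Injective ψ := by
  have := Fintype.ofFinite σ
  have hlen : (Finset.univ.toList.map (X : σ → MvPolynomial σ k)).length = Nat.card σ := by
    simp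
  refine injective_of_minimal_of_hasDepthGE isRegular_map_X_toList ?_ ?_ ?_
  · rw [hlen, ringKrullDim_of_isNoetherianRing, ringKrullDim_eq_zero_of_field, zero_add]
  · rwa [hlen, ofList_map_X_toList]
  · rwa [ofList_map_X_toList]

lemma exists_homogeneous_basis_ker_linearCombination {s d : ℕ} (hcard : Nat.card σ = d + 2)
    {f : Fin s → MvPolynomial σ k} {e : Fin s → ℕ} (he : ∀ j, (f j).IsHomogeneous (e j))
    (hf : HasDepthGE (idealOfVars σ k) (MvPolynomial σ k ⧸ Ideal.span (Set.range f)) d) :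
    ∃ (t : ℕ) (w : Fin t → Fin s → MvPolynomial σ k) (m : Fin t → ℕ),
      (∀ i, IsHomogeneousVec e (m i) (w i)) ∧
      Submodule.span _ (Set.range w) = LinearMap.ker (Fintype.linearCombination _ f) ∧
      Function.Injective (Fintype.linearCombination (MvPolynomial σ k) w) := by
  obtain ⟨t, w, m, hm, hw, hmin⟩ := exists_minimal_span_isHomogeneousVec e
    (K := LinearMap.ker (Fintype.linearCombination (MvPolynomial σ k) f)) fun v hv m => by
      change vecComponent e m v ⬝ᵥ f = 0
      rw [vecComponent_dotProduct he, show v ⬝ᵥ f = 0 from hv, map_zero]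
  refine ⟨t, w, m, hm, hw, injective_of_forall_mem_idealOfVars ?_ hmin⟩
  rw [Fintype.range_linearCombination, hw, hcard]
  exact HasDepthGE.ker_linearCombination (hcard ▸ hasDepthGE_idealOfVars) hf

lemma exists_isHomogeneousMatrix_span_range_signedMinor_eq {s d : ℕ} (hcard : Nat.card σ = d + 2)
    {f : Fin s → MvPolynomial σ k} {e : Fin s → ℕ} (he : ∀ j, (f j).IsHomogeneous (e j))
    (hf : HasDepthGE (idealOfVars σ k) (MvPolynomial σ k ⧸ Ideal.span (Set.range f)) d)
    (hrel : IsRelPrimeFamily f) :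
    ∃ (t : ℕ) (A : Matrix (Fin t) (Fin (t + 1)) (MvPolynomial σ k))
        (a : Fin (t + 1) → ℕ) (b : Fin t → ℕ),
      IsHomogeneousMatrix a b A ∧
        Ideal.span (Set.range (signedMinor A)) = Ideal.span (Set.range f) := by
  obtain ⟨t, w, m, hm, hw, hinj⟩ := exists_homogeneous_basis_ker_linearCombination hcard he hf
  obtain rfl := eq_add_one_of_injective_linearCombination hrel.exists_ne_zero hw hinj
  obtain ⟨a, b, hab⟩ := exists_isHomogeneousMatrix_of_isHomogeneousVec hm
  exact ⟨t, Matrix.of w, a, b, hab, span_range_signedMinor_of_eq_span hrel hw⟩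

variable {d : ℕ} {I : Ideal (MvPolynomial σ k)}

lemma hasDepthGE_iff_exists_isHomogeneousMatrix (hcard : Nat.card σ = d + 2)
    (hhom : ∃ S : Set (MvPolynomial σ k), (∀ s ∈ S, ∃ d, s.IsHomogeneous d) ∧ I = Ideal.span S)
    (hdim : ringKrullDim (MvPolynomial σ k ⧸ I) = d) :
    HasDepthGE (idealOfVars σ k) (MvPolynomial σ k ⧸ I) d ↔
      ∃ (t : ℕ) (A : Matrix (Fin t) (Fin (t + 1)) (MvPolynomial σ k))
          (a : Fin (t + 1) → ℕ) (b : Fin t → ℕ),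
        IsHomogeneousMatrix a b A ∧ I = Ideal.span (Set.range (signedMinor A)) := by
  have hlt : ringKrullDim (MvPolynomial σ k ⧸ I) + 1 < Nat.card σ := by
    rw [hdim, hcard]
    exact_mod_cast (d + 1).lt_succ_self
  constructor
  · intro hI
    obtain ⟨S, hS, hIS⟩ := hhom
    obtain ⟨s, f, hfS, hspan⟩ := exists_fin_span_range_eq_span (R := MvPolynomial σ k) S
    choose e he using fun j => hS _ (hfS j)
    obtain rfl : I = Ideal.span (Set.range f) := hIS.trans hspan.symm
    obtain ⟨t, A, a, b, hab, hA⟩ := exists_isHomogeneousMatrix_span_range_signedMinor_eq hcard he hI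
      (isRelPrimeFamily_of_ringKrullDim_lt hlt)
    exact ⟨t, A, a, b, hab, hA.symm⟩
  · rintro ⟨t, A, -, -, -, rfl⟩
    exact HasDepthGE.quotient_span_signedMinor (isRelPrimeFamily_of_ringKrullDim_lt hlt)
      (hcard ▸ hasDepthGE_idealOfVars)

lemma hasDepthGE_iff_exists_isRegular_map_mk (hI : I ≠ ⊤)
    (hhom : ∃ S : Set (MvPolynomial σ k), (∀ s ∈ S, ∃ d, s.IsHomogeneous d) ∧ I = Ideal.span S) :
    HasDepthGE (idealOfVars σ k) (MvPolynomial σ k ⧸ I) d ↔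
      ∃ L : List (MvPolynomial σ k),
        L.length = d ∧ (∀ x ∈ L, x ∈ idealOfVars σ k) ∧
        RingTheory.Sequence.IsRegular (MvPolynomial σ k ⧸ I) (L.map (Ideal.Quotient.mk I)) := by
  obtain ⟨S, hS, hIS⟩ := hhom
  simp only [isRegular_map_mk_iff]
  exact HasDepthGE.iff_exists_isRegular
    (smul_top_quotient_ne_top (le_idealOfVars_of_isHomogeneous hI hS hIS) idealOfVars_ne_top)

end HomogeneousMatrices

end HilbertBurch

open HilbertBurch in
theorem hilbert_burch_general {σ k : Type*} [Finite σ] [Field k] {d : ℕ}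
    (hcard : Nat.card σ = d + 2) {I : Ideal (MvPolynomial σ k)}
    (hhom : ∃ S : Set (MvPolynomial σ k), (∀ s ∈ S, ∃ d, s.IsHomogeneous d) ∧ I = Ideal.span S)
    (hcodim2 : ringKrullDim (MvPolynomial σ k ⧸ I) = d) :
    (∃ (t : ℕ) (A : Matrix (Fin t) (Fin (t + 1)) (MvPolynomial σ k))
        (a : Fin (t + 1) → ℕ) (b : Fin t → ℕ),
      (∀ i j, A i j = 0 ∨ ((A i j).IsHomogeneous (a j - b i) ∧ b i ≤ a j)) ∧
      I = Ideal.span {d | ∃ j : Fin (t + 1), d = (A.submatrix id j.succAbove).det})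
    ↔
    (∃ L : List (MvPolynomial σ k),
      L.length = d ∧
      (∀ x ∈ L, x ∈ (Ideal.span (Set.range X) : Ideal (MvPolynomial σ k))) ∧
      RingTheory.Sequence.IsRegular (MvPolynomial σ k ⧸ I) (L.map (Ideal.Quotient.mk I))) := by
  have hI : I ≠ ⊤ := by
    rintro rfl
    rw [ringKrullDim_eq_bot_of_subsingleton] at hcodim2
    exact WithBot.bot_ne_coe hcodim2
  simp only [← span_range_signedMinor]
  exact (hasDepthGE_iff_exists_isHomogeneousMatrix hcard hhom hcodim2).symm.trans
    (hasDepthGE_iff_exists_isRegular_map_mk hI hhom)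

set_option synthInstance.maxHeartbeats 400000 in
/-- Hilbert–Burch: a codimension-`2` closed subscheme `V ⊂ P^n`,
given by its saturated homogeneous ideal `I ⊂ R = k[z₀,…,z_n]` with
`dim R/I = n−1`, is standard determinantal (its ideal is generated by the maximal
minors of a homogeneous `t×(t+1)` matrix) if and only if it is arithmetically
Cohen–Macaulay (there is a regular sequence on `R/I` of elements of the irrelevant
maximal ideal of length `n−1 = dim R/I`). -/
theorem hilbert_burch (k : Type*) [Field k] (n : ℕ) (hn : 2 ≤ n)
    (I : Ideal (MvPolynomial (Fin (n + 1)) k))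
    (hhom : ∃ S : Set (MvPolynomial (Fin (n + 1)) k),
      (∀ s ∈ S, ∃ d, s.IsHomogeneous d) ∧ I = Ideal.span S)
    (hsat : ∀ f, (∃ N : ℕ,
        ∀ g ∈ (Ideal.span (Set.range X) : Ideal (MvPolynomial (Fin (n + 1)) k)) ^ N,
          g * f ∈ I) → f ∈ I)
    (hcodim2 : ringKrullDim (MvPolynomial (Fin (n + 1)) k ⧸ I) = ((n - 1 : ℕ) : WithBot ℕ∞)) :
    (∃ (t : ℕ) (A : Matrix (Fin t) (Fin (t + 1)) (MvPolynomial (Fin (n + 1)) k))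
        (a : Fin (t + 1) → ℕ) (b : Fin t → ℕ),
      (∀ i j, A i j = 0 ∨ ((A i j).IsHomogeneous (a j - b i) ∧ b i ≤ a j)) ∧
      I = Ideal.span {d | ∃ j : Fin (t + 1), d = (A.submatrix id j.succAbove).det})
    ↔
    (∃ L : List (MvPolynomial (Fin (n + 1)) k),
      L.length = n - 1 ∧
      (∀ x ∈ L, x ∈ (Ideal.span (Set.range X) : Ideal (MvPolynomial (Fin (n + 1)) k))) ∧
      RingTheory.Sequence.IsRegular (MvPolynomial (Fin (n + 1)) k ⧸ I)
        (L.map (Ideal.Quotient.mk I))) := by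
  have hcard : Nat.card (Fin (n + 1)) = n - 1 + 2 := by
    rw [Nat.card_fin]
    omega
  exact hilbert_burch_general hcard hhom hcodim2
end

section
/- In R = k[z_0,…,z_5], with I_F the ideal of 2×2 minors of [[z_0,z_3,z_4],[z_3,z_1,z_5],[z_4,z_5,z_2]] and I_H = (z_0,z_3,z_4), the intersection I_F ∩ I_H equals the ideal I_X = (z_3z_4 − z_0z_5, z_1z_4 − z_3z_5, z_2z_3 − z_4z_5, z_0z_2 − z_4^2, z_0z_1 − z_3^2). -/
/-!
The plane is cut out by the first column of the symmetric matrix whose `2 × 2` minors define the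
Veronese surface, and `I_X` is generated by all of these minors except the cofactor
`q = z₁z₂ - z₅²` of the corner entry `z₀`. The relations between a matrix and its adjugate show
that `q` multiplies the first column into `I_X`, while `q` is a nonzerodivisor modulo `I_H` because
it is, up to sign, monic in `z₅`. Since `I_X ≤ I_H`, the modular law gives
`(I_X + (q)) ∩ I_H = I_X + (q) ∩ I_H = I_X + q I_H = I_X`.
-/

open MvPolynomial

open scoped nonZeroDivisors

theorem sup_span_singleton_inf_eq_left {R : Type*} [CommRing R] {I J : Ideal R} {q : R}
    (hIJ : I ≤ J) (hq : IsSMulRegular (R ⧸ J) q) (hJ : J ≤ I.colon {q}) :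
    (I ⊔ Ideal.span {q}) ⊓ J = I := by
  rw [sup_inf_assoc_of_le _ hIJ, sup_eq_left]
  rintro _ ⟨haq, haJ⟩
  obtain ⟨a, rfl⟩ := Ideal.mem_span_singleton.1 haq
  have ha : a ∈ J := mem_of_isSMulRegular_quotient_of_smul_mem hq haJ
  simpa [Submodule.mem_colon_singleton, mul_comm] using hJ ha

section MvPolynomial

variable {σ τ R : Type*} {f : σ → τ}

theorem ker_killCompl [CommSemiring R] (hf : Function.Injective f) :
    RingHom.ker (killCompl hf : MvPolynomial τ R →ₐ[R] MvPolynomial σ R) =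
      Ideal.span (X '' (Set.range f)ᶜ) := by
  ext p
  rw [RingHom.mem_ker, mem_ideal_span_X_image, ← support_eq_empty, support_killCompl,
    ← Finset.coe_eq_empty, Finset.coe_preimage, Set.preimage_eq_empty_iff, Set.disjoint_left]
  simp [Finsupp.mem_range_mapDomain_iff f hf]

theorem isSMulRegular_quotient_span_X_image_compl_range [CommRing R] (hf : Function.Injective f)
    {p : MvPolynomial σ R} (hp : p ∈ (MvPolynomial σ R)⁰) :
    IsSMulRegular (MvPolynomial τ R ⧸ Ideal.span (X '' (Set.range f)ᶜ : Set (MvPolynomial τ R)))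
      (rename f p) := by
  rw [isSMulRegular_quotient_iff_mem_of_smul_mem, ← ker_killCompl hf]
  intro a ha
  simpa [RingHom.mem_ker, mul_left_mem_nonZeroDivisors_eq_zero_iff hp] using ha

theorem finSuccEquiv_rename_succ [CommSemiring R] {n : ℕ} (p : MvPolynomial (Fin n) R) :
    finSuccEquiv R n (rename Fin.succ p) = Polynomial.C p := by
  induction p using MvPolynomial.induction_on with
  | C a => simp [finSuccEquiv_apply]
  | add p q hp hq => simp [hp, hq]
  | mul_X p i hp => simp [hp, finSuccEquiv_X_succ]

theorem C_sub_X_pow_mem_nonZeroDivisors [CommRing R] {m : ℕ} (hm : m ≠ 0) (a : R) :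
    Polynomial.C a - Polynomial.X ^ m ∈ (Polynomial R)⁰ := by
  rw [← neg_sub, ← neg_one_mul]
  exact mul_mem isUnit_one.neg.mem_nonZeroDivisors
    (Polynomial.monic_X_pow_sub_C a hm).mem_nonZeroDivisors

theorem rename_succ_sub_X_zero_pow_mem_nonZeroDivisors [CommRing R] {n m : ℕ} (hm : m ≠ 0)
    (p : MvPolynomial (Fin n) R) :
    rename Fin.succ p - X 0 ^ m ∈ (MvPolynomial (Fin (n + 1)) R)⁰ := by
  apply mem_nonZeroDivisors_of_injective (finSuccEquiv R n).injective
  rw [map_sub, map_pow, finSuccEquiv_rename_succ, finSuccEquiv_X_zero]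
  exact C_sub_X_pow_mem_nonZeroDivisors hm p

end MvPolynomial

section Veronese

variable {R : Type*} [CommRing R] (z : Fin 6 → R)

/-- The ideal `I_F` of the Veronese surface: the `2 × 2` minors of the symmetric matrix
`[[z₀,z₃,z₄],[z₃,z₁,z₅],[z₄,z₅,z₂]]`, with entries in any commutative ring so that the
determinantal identities apply to it. -/
def veroneseIdeal : Ideal R :=
  Ideal.span
    {z 3 * z 4 - z 0 * z 5, z 1 * z 4 - z 3 * z 5, z 2 * z 3 - z 4 * z 5,
     z 1 * z 2 - z 5 ^ 2, z 0 * z 2 - z 4 ^ 2, z 0 * z 1 - z 3 ^ 2}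

/-- The ideal `I_H` of the plane, generated by the first column of the matrix defining
`veroneseIdeal`. -/
def planeIdeal : Ideal R :=
  Ideal.span {z 0, z 3, z 4}

/-- The ideal `I_X` of the union of the Veronese surface and the plane, encoded by its generators:
the minors of `veroneseIdeal` other than `z₁z₂ - z₅²`. -/
def linkIdeal : Ideal R :=
  Ideal.span
    {z 3 * z 4 - z 0 * z 5, z 1 * z 4 - z 3 * z 5, z 2 * z 3 - z 4 * z 5,
     z 0 * z 2 - z 4 ^ 2, z 0 * z 1 - z 3 ^ 2}

/-- The cofactor `q` of the entry `z₀`, the one minor by which `veroneseIdeal` and `linkIdeal`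
differ. -/
def cornerCofactor : R :=
  z 1 * z 2 - z 5 ^ 2

theorem linkIdeal_sup_span_cornerCofactor :
    linkIdeal z ⊔ Ideal.span {cornerCofactor z} = veroneseIdeal z := by
  rw [linkIdeal, ← Ideal.span_union, veroneseIdeal, cornerCofactor]
  congr 1
  grind

theorem linkIdeal_le_planeIdeal : linkIdeal z ≤ planeIdeal z := by
  have h₀ : Ideal.Quotient.mk (planeIdeal z) (z 0) = 0 :=
    Ideal.Quotient.eq_zero_iff_mem.2 (Ideal.subset_span (by simp))
  have h₃ : Ideal.Quotient.mk (planeIdeal z) (z 3) = 0 :=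
    Ideal.Quotient.eq_zero_iff_mem.2 (Ideal.subset_span (by simp))
  have h₄ : Ideal.Quotient.mk (planeIdeal z) (z 4) = 0 :=
    Ideal.Quotient.eq_zero_iff_mem.2 (Ideal.subset_span (by simp))
  rw [linkIdeal, Ideal.span_le]
  rintro _ (rfl | rfl | rfl | rfl | rfl) <;>
    simp [← Ideal.Quotient.eq_zero_iff_mem, h₀, h₃, h₄]

theorem planeIdeal_le_colon_cornerCofactor :
    planeIdeal z ≤ (linkIdeal z).colon {cornerCofactor z} := by
  have h₀₅ : z 3 * z 4 - z 0 * z 5 ∈ linkIdeal z := Ideal.subset_span (by simp)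
  have h₃₅ : z 1 * z 4 - z 3 * z 5 ∈ linkIdeal z := Ideal.subset_span (by simp)
  have h₄₅ : z 2 * z 3 - z 4 * z 5 ∈ linkIdeal z := Ideal.subset_span (by simp)
  have h₀₂ : z 0 * z 2 - z 4 ^ 2 ∈ linkIdeal z := Ideal.subset_span (by simp)
  rw [planeIdeal, Ideal.span_le]
  rintro _ (rfl | rfl | rfl) <;>
    rw [SetLike.mem_coe, Submodule.mem_colon_singleton, smul_eq_mul, cornerCofactor]
  · have expansion₀ : z 0 * (z 1 * z 2 - z 5 ^ 2) = z 1 * (z 0 * z 2 - z 4 ^ 2) +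
        z 4 * (z 1 * z 4 - z 3 * z 5) + z 5 * (z 3 * z 4 - z 0 * z 5) := by ring
    rw [expansion₀]
    exact add_mem (add_mem (Ideal.mul_mem_left _ _ h₀₂) (Ideal.mul_mem_left _ _ h₃₅))
      (Ideal.mul_mem_left _ _ h₀₅)
  · have expansion₃ : z 3 * (z 1 * z 2 - z 5 ^ 2) =
        z 1 * (z 2 * z 3 - z 4 * z 5) + z 5 * (z 1 * z 4 - z 3 * z 5) := by ring
    rw [expansion₃]
    exact add_mem (Ideal.mul_mem_left _ _ h₄₅) (Ideal.mul_mem_left _ _ h₃₅)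
  · have expansion₄ : z 4 * (z 1 * z 2 - z 5 ^ 2) =
        z 2 * (z 1 * z 4 - z 3 * z 5) + z 5 * (z 2 * z 3 - z 4 * z 5) := by ring
    rw [expansion₄]
    exact add_mem (Ideal.mul_mem_left _ _ h₃₅) (Ideal.mul_mem_left _ _ h₄₅)

theorem veroneseIdeal_inf_planeIdeal
    (hq : IsSMulRegular (R ⧸ planeIdeal z) (cornerCofactor z)) :
    veroneseIdeal z ⊓ planeIdeal z = linkIdeal z := by
  rw [← linkIdeal_sup_span_cornerCofactor]
  exact sup_span_singleton_inf_eq_left (linkIdeal_le_planeIdeal z) hq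
    (planeIdeal_le_colon_cornerCofactor z)

end Veronese

theorem isSMulRegular_cornerCofactor_X (k : Type*) [CommRing k] :
    IsSMulRegular (MvPolynomial (Fin 6) k ⧸ planeIdeal (X : Fin 6 → MvPolynomial (Fin 6) k))
      (cornerCofactor (X : Fin 6 → MvPolynomial (Fin 6) k)) := by
  -- `z₅` is listed first so that it becomes the variable `X 0` in which the cofactor is monic.
  have hf : Function.Injective (![5, 1, 2] : Fin 3 → Fin 6) := by decide
  have hrange : (Set.range (![5, 1, 2] : Fin 3 → Fin 6))ᶜ = {0, 3, 4} := by
    ext i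
    fin_cases i <;> simp
  have hplane : Ideal.span (X '' (Set.range (![5, 1, 2] : Fin 3 → Fin 6))ᶜ) =
      planeIdeal (X : Fin 6 → MvPolynomial (Fin 6) k) := by
    rw [hrange]
    simp [Set.image_insert_eq, planeIdeal]
  have hcofactor : rename ![5, 1, 2] (rename Fin.succ (X 0 * X 1) - X 0 ^ 2) =
      cornerCofactor (X : Fin 6 → MvPolynomial (Fin 6) k) := by
    simp [cornerCofactor]
  rw [← hplane, ← hcofactor]
  exact isSMulRegular_quotient_span_X_image_compl_range hf
    (rename_succ_sub_X_zero_pow_mem_nonZeroDivisors two_ne_zero (X 0 * X 1))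

theorem veronese_link_ideal_general (k : Type*) [CommRing k] :
    letI R := MvPolynomial (Fin 6) k
    letI z : Fin 6 → R := X
    letI IF : Ideal R := Ideal.span
      {z 3 * z 4 - z 0 * z 5, z 1 * z 4 - z 3 * z 5, z 2 * z 3 - z 4 * z 5,
       z 1 * z 2 - z 5 ^ 2, z 0 * z 2 - z 4 ^ 2, z 0 * z 1 - z 3 ^ 2}
    letI IH : Ideal R := Ideal.span {z 0, z 3, z 4}
    IF ⊓ IH = Ideal.span
      {z 3 * z 4 - z 0 * z 5, z 1 * z 4 - z 3 * z 5, z 2 * z 3 - z 4 * z 5,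
       z 0 * z 2 - z 4 ^ 2, z 0 * z 1 - z 3 ^ 2} :=
  veroneseIdeal_inf_planeIdeal X (isSMulRegular_cornerCofactor_X k)

/-- in `R = k[z₀,…,z₅]`, with `I_F` the ideal of `2×2` minors of
`[[z₀,z₃,z₄],[z₃,z₁,z₅],[z₄,z₅,z₂]]` and `I_H = (z₀,z₃,z₄)`, one has
`I_F ∩ I_H = (z₃z₄−z₀z₅, z₁z₄−z₃z₅, z₂z₃−z₄z₅, z₀z₂−z₄², z₀z₁−z₃²)`. -/
theorem veronese_link_ideal (k : Type*) [Field k] :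
    letI R := MvPolynomial (Fin 6) k
    letI z : Fin 6 → R := X
    letI IF : Ideal R := Ideal.span
      {z 3 * z 4 - z 0 * z 5, z 1 * z 4 - z 3 * z 5, z 2 * z 3 - z 4 * z 5,
       z 1 * z 2 - z 5 ^ 2, z 0 * z 2 - z 4 ^ 2, z 0 * z 1 - z 3 ^ 2}
    letI IH : Ideal R := Ideal.span {z 0, z 3, z 4}
    IF ⊓ IH = Ideal.span
      {z 3 * z 4 - z 0 * z 5, z 1 * z 4 - z 3 * z 5, z 2 * z 3 - z 4 * z 5,
       z 0 * z 2 - z 4 ^ 2, z 0 * z 1 - z 3 ^ 2} :=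
  veronese_link_ideal_general k
end

section
/- Let I ⊂ R = k[z_0,…,z_n] be a saturated unmixed ideal and J ⊆ I an ideal generated by a regular sequence of homogeneous elements with ht(J) = ht(I). Then the double link (J : (J : I)) = I. -/
open MvPolynomial

/-!
Inclusions of ideals can be checked at the associated primes of the larger one, and colon ideals
commute with localization, so it suffices to treat a regular local ring `A` of dimension `d`, a
regular sequence `L` of length `d` and an ideal containing `(L)`.

If `a` and `b` are regular on `M`, then `M ⧸ aM` and `M ⧸ bM` are the `a`-torsion and the
`b`-torsion of `M ⧸ abM`, so a module killed by `a` and `b` has the same homomorphisms into both.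
Hence the terms of `L` may be traded, one at a time, for generators of the maximal ideal `m`,
without changing `Hom(A ⧸ m, A ⧸ (L))`. Since `m` has `d` generators, the result is
`Hom(A ⧸ m, A ⧸ m)`, which has length one.

By induction on length, `Hom(-, A ⧸ (L))` then does not increase lengths. For a submodule `N` of
`E = A ⧸ (L)`, the elements of `E` killed by `ann N` form `Hom(A ⧸ ann N, E)`, and `A ⧸ ann N`
embeds in `Hom(N, E)`; so they form a module that contains `N` and is no longer than `N`.
-/

section Duality

theorem length_le_add_of_exact {A M N P : Type*} [Ring A] [AddCommGroup M] [Module A M]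
    [AddCommGroup N] [Module A N] [AddCommGroup P] [Module A P] {f : N →ₗ[A] M} {g : M →ₗ[A] P}
    (hfg : Function.Exact f g) :
    Module.length A M ≤ Module.length A N + Module.length A P := by
  rw [Module.length_eq_add_of_exact (LinearMap.ker g).subtype g.rangeRestrict
    (Submodule.subtype_injective _) g.surjective_rangeRestrict
    (by rw [LinearMap.exact_iff, LinearMap.ker_rangeRestrict, Submodule.range_subtype]),
    hfg.linearMap_ker_eq]
  exact add_le_add (Module.length_le_of_surjective _ f.surjective_rangeRestrict)
    (Module.length_le_of_injective _ (Submodule.subtype_injective _))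

variable {A N E : Type*} [CommRing A] [AddCommGroup N] [Module A N] [AddCommGroup E] [Module A E]

theorem length_linearMap_le
    (hE : ∀ m : Ideal A, m.IsMaximal → Module.length A (A ⧸ m →ₗ[A] E) ≤ 1) :
    Module.length A (N →ₗ[A] E) ≤ Module.length A N := by
  by_cases hN : Module.length A N = ⊤
  · exact hN ▸ le_top
  induction Module.length_ne_top_iff.mp hN with
  | of_subsingleton => rw [Module.length_eq_zero]; exact zero_le
  | @of_simple_quotient M _ _ N hsimple hfin ih =>
    obtain ⟨m, hm, ⟨e⟩⟩ := isSimpleModule_iff_quot_maximal.mp hsimple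
    calc Module.length A (M →ₗ[A] E)
      _ ≤ Module.length A (M ⧸ N →ₗ[A] E) + Module.length A (N →ₗ[A] E) :=
        length_le_add_of_exact <|
          LinearMap.exact_lcomp_of_exact_of_surjective E
            (LinearMap.exact_subtype_mkQ N) N.mkQ_surjective
      _ ≤ 1 + Module.length A N := add_le_add ((e.congrLeft E A).length_eq.trans_le (hE m hm))
          (ih (Module.length_ne_top_iff.mpr hfin))
      _ = Module.length A N + Module.length A (M ⧸ N) := by
        rw [add_comm, Module.length_eq_one_iff.mpr hsimple]
      _ = Module.length A M := (Module.length_eq_add_of_exact N.subtype N.mkQ N.subtype_injective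
        N.mkQ_surjective (LinearMap.exact_subtype_mkQ N)).symm

/-- Linear maps out of `A ⧸ I` are determined by the image of `1`, which can be any element
killed by `I`. -/
def linearMapQuotientEquivTorsionBySet (I : Ideal A) (E : Type*) [AddCommGroup E] [Module A E] :
    (A ⧸ I →ₗ[A] E) ≃ₗ[A] Submodule.torsionBySet A E I where
  toFun f := ⟨f (Submodule.Quotient.mk 1), (Submodule.mem_torsionBySet_iff _ _).mpr fun a ↦ by
    rw [← map_smul, ← Submodule.Quotient.mk_smul, smul_eq_mul, mul_one,
      (Submodule.Quotient.mk_eq_zero I).mpr a.2, map_zero]⟩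
  map_add' _ _ := rfl
  map_smul' _ _ := rfl
  invFun x := I.liftQ (LinearMap.toSpanSingleton A E x) fun a ha ↦
    (Submodule.mem_torsionBySet_iff _ _).mp x.2 ⟨a, ha⟩
  left_inv f := by ext; simp
  right_inv _ := Subtype.ext (one_smul A _)

theorem length_quotient_annihilator_le (N : Submodule A E) :
    Module.length A (A ⧸ N.annihilator) ≤ Module.length A (N →ₗ[A] E) := by
  have hker : LinearMap.ker (LinearMap.toSpanSingleton A (N →ₗ[A] E) N.subtype) =
      N.annihilator := by
    ext a
    simp [LinearMap.ext_iff, Submodule.mem_annihilator]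
  rw [← hker, (LinearMap.quotKerEquivRange _).length_eq]
  exact Module.length_le_of_injective _ (Submodule.subtype_injective _)

theorem torsionBySet_annihilator
    (hE : ∀ m : Ideal A, m.IsMaximal → Module.length A (A ⧸ m →ₗ[A] E) ≤ 1)
    {N : Submodule A E} (hN : IsFiniteLength A N) :
    Submodule.torsionBySet A E N.annihilator = N := by
  have hle : N ≤ Submodule.torsionBySet A E N.annihilator :=
    (Submodule.torsion_gc A E).le_u_l N
  have hlength : Module.length A (Submodule.torsionBySet A E N.annihilator) ≤
      Module.length A N :=
    calc Module.length A (Submodule.torsionBySet A E N.annihilator)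
      _ = Module.length A (A ⧸ N.annihilator →ₗ[A] E) :=
        (linearMapQuotientEquivTorsionBySet _ E).length_eq.symm
      _ ≤ Module.length A (A ⧸ N.annihilator) := length_linearMap_le hE
      _ ≤ Module.length A (N →ₗ[A] E) := length_quotient_annihilator_le N
      _ ≤ Module.length A N := length_linearMap_le hE
  have hfin := (Module.length_ne_top_iff.mpr hN).lt_top
  rw [Module.length_submodule] at hfin
  rw [Module.length_submodule, Module.length_submodule] at hlength
  exact (eq_of_le_of_not_lt hle fun hlt ↦
    (Order.height_strictMono hlt hfin).not_ge hlength).symm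

theorem comap_mkQ_torsionBySet (J : Ideal A) (s : Set A) :
    (Submodule.torsionBySet A (A ⧸ J) s).comap J.mkQ = J.colon s := by
  ext f
  rw [Submodule.mem_comap, Submodule.mem_torsionBySet_iff, Submodule.mem_colon,
    SetCoe.forall]
  refine forall₂_congr fun a _ ↦ ?_
  rw [← map_smul, Submodule.mkQ_apply, Submodule.Quotient.mk_eq_zero, smul_eq_mul, smul_eq_mul,
    mul_comm]

theorem colon_colon_eq_of_length_linearMap_le_one {I J : Ideal A} (hJI : J ≤ I)
    (hJ : ∀ m : Ideal A, m.IsMaximal → Module.length A (A ⧸ m →ₗ[A] A ⧸ J) ≤ 1)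
    (hI : IsFiniteLength A (Submodule.map J.mkQ I)) :
    J.colon (J.colon (I : Set A) : Set A) = I := by
  rw [← comap_mkQ_torsionBySet, ← Submodule.annihilator_map_mkQ_eq_colon,
    torsionBySet_annihilator hJ hI, Submodule.comap_map_mkQ, sup_eq_right.mpr hJI]

end Duality

section Exchange

open Pointwise

variable {A M N Q : Type*} [CommRing A] [AddCommGroup M] [Module A M] [AddCommGroup N]
  [Module A N] [AddCommGroup Q] [Module A Q]

variable (M) in
/-- The map `M ⧸ aM → M ⧸ abM` induced by multiplication by `b`. -/
def quotSMulTopMul (a b : A) : QuotSMulTop a M →ₗ[A] QuotSMulTop (a * b) M :=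
  Submodule.mapQ _ _ (LinearMap.lsmul A M b) <| by
    rintro _ ⟨x, -, rfl⟩
    exact ⟨x, trivial, by simp [mul_smul, smul_comm a b]⟩

theorem quotSMulTopMul_injective {b : A} (a : A) (hb : IsSMulRegular M b) :
    Function.Injective (quotSMulTopMul M a b) := by
  rw [← LinearMap.ker_eq_bot, LinearMap.ker_eq_bot']
  intro x hx
  obtain ⟨x, rfl⟩ := Submodule.Quotient.mk_surjective _ x
  obtain ⟨y, -, hy⟩ := (Submodule.Quotient.mk_eq_zero _).mp hx
  refine (Submodule.Quotient.mk_eq_zero _).mpr ⟨y, trivial, hb ?_⟩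
  simpa [mul_smul, smul_comm a b] using hy

theorem range_quotSMulTopMul {a : A} (b : A) (ha : IsSMulRegular M a) :
    LinearMap.range (quotSMulTopMul M a b) =
      Submodule.torsionBy A (QuotSMulTop (a * b) M) a := by
  apply le_antisymm
  · rintro _ ⟨x, rfl⟩
    obtain ⟨x, rfl⟩ := Submodule.Quotient.mk_surjective _ x
    rw [Submodule.mem_torsionBy_iff]
    exact (Submodule.Quotient.mk_eq_zero _).mpr ⟨x, trivial, mul_smul a b x⟩
  · intro x hx
    obtain ⟨x, rfl⟩ := Submodule.Quotient.mk_surjective _ x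
    obtain ⟨y, -, hy⟩ := (Submodule.Quotient.mk_eq_zero _).mp hx
    obtain rfl : b • y = x := ha ((mul_smul a b y).symm.trans hy)
    exact ⟨Submodule.Quotient.mk y, rfl⟩

/-- Linear maps out of a module killed by `a` land in the `a`-torsion. -/
def linearMapTorsionByEquiv {a : A} (hN : Module.IsTorsionBy A N a) :
    (N →ₗ[A] Submodule.torsionBy A Q a) ≃ₗ[A] (N →ₗ[A] Q) where
  toFun f := (Submodule.torsionBy A Q a).subtype ∘ₗ f
  map_add' _ _ := rfl
  map_smul' _ _ := rfl
  invFun f := f.codRestrict _ fun x ↦ by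
    rw [Submodule.mem_torsionBy_iff, ← map_smul, hN, map_zero]
  left_inv _ := rfl
  right_inv _ := rfl

/-- `M ⧸ aM` is the `a`-torsion of `M ⧸ abM`, so it receives the same maps from `N`. -/
noncomputable def linearMapQuotSMulTopMulEquiv {a b : A} (ha : IsSMulRegular M a)
    (hb : IsSMulRegular M b) (hN : Module.IsTorsionBy A N a) :
    (N →ₗ[A] QuotSMulTop a M) ≃ₗ[A] (N →ₗ[A] QuotSMulTop (a * b) M) :=
  LinearEquiv.congrRight (.ofInjective _ (quotSMulTopMul_injective a hb) ≪≫ₗ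
    .ofEq _ _ (range_quotSMulTopMul b ha)) ≪≫ₗ linearMapTorsionByEquiv hN

/-- Both sides are `Hom(N, M ⧸ abM)`. This is the independence of `a` in Rees's degree shift
`Hom(N, M ⧸ aM) ≅ Ext¹(N, M)`. -/
noncomputable def linearMapQuotSMulTopEquiv {a b : A} (ha : IsSMulRegular M a)
    (hb : IsSMulRegular M b) (hNa : Module.IsTorsionBy A N a) (hNb : Module.IsTorsionBy A N b) :
    (N →ₗ[A] QuotSMulTop a M) ≃ₗ[A] (N →ₗ[A] QuotSMulTop b M) :=
  linearMapQuotSMulTopMulEquiv ha hb hNa ≪≫ₗ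
    .congrRight (Submodule.quotEquivOfEq _ _ (by rw [mul_comm])) ≪≫ₗ
    (linearMapQuotSMulTopMulEquiv hb ha hNb).symm

theorem exists_isSMulRegular_notMem [IsNoetherianRing A] [Module.Finite A M] {I K : Ideal A}
    {a : A} (ha : a ∈ I) (hreg : IsSMulRegular M a) (hIK : ¬ I ≤ K) :
    ∃ z ∈ I, IsSMulRegular M z ∧ z ∉ K := by
  by_contra! h
  have hcover : (I : Set A) ⊆ ⋃ p ∈ insert K (associatedPrimes A M), (p : Set A) := by
    intro z hz
    rw [Set.biUnion_insert, biUnion_associatedPrimes_eq_compl_regular]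
    exact (em (IsSMulRegular M z)).imp (h z hz) id
  obtain ⟨p, rfl | hp, hIp⟩ := (Ideal.subset_union_prime_finite
    ((associatedPrimes.finite A M).insert K) K K
    fun p hp hpK _ ↦ (hp.resolve_left hpK).isPrime).mp hcover
  · exact hIK hIp
  · exact (biUnion_associatedPrimes_eq_compl_regular A M).le
      (Set.mem_biUnion hp (hIp ha)) hreg

theorem exists_span_le_sup_span_erase [IsLocalRing A] [DecidableEq M] {K : Submodule A M}
    {S : Finset M} {z : M} (hz : z ∈ K ⊔ Submodule.span A S)
    (hz' : z ∉ K ⊔ IsLocalRing.maximalIdeal A • Submodule.span A (S : Set M)) :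
    ∃ g ∈ S, Submodule.span A S ≤ K ⊔ Submodule.span A {z} ⊔ Submodule.span A (S.erase g) := by
  obtain ⟨k, hk, y, hy, rfl⟩ := Submodule.mem_sup.mp hz
  obtain ⟨c, -, rfl⟩ := Submodule.mem_span_finset.mp hy
  obtain ⟨g, hg, hcg⟩ : ∃ g ∈ S, c g ∉ IsLocalRing.maximalIdeal A := by
    by_contra! h
    exact hz' <| add_mem (Submodule.mem_sup_left hk) <| Submodule.mem_sup_right <|
      sum_mem fun g hg ↦ Submodule.smul_mem_smul (h g hg) (Submodule.subset_span hg)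
  refine ⟨g, hg, ?_⟩
  have hrest : ∑ i ∈ S.erase g, c i • i ∈ Submodule.span A (S.erase g : Set M) :=
    sum_mem fun i hi ↦ Submodule.smul_mem _ _ (Submodule.subset_span hi)
  have hsmul : c g • g =
      (-k + (k + ∑ i ∈ S, c i • i)) - ∑ i ∈ S.erase g, c i • i := by
    rw [neg_add_cancel_left, ← Finset.add_sum_erase S _ hg, add_sub_cancel_right]
  calc Submodule.span A (S : Set M)
    _ = Submodule.span A {g} ⊔ Submodule.span A (S.erase g) := by
      rw [← Submodule.span_insert, ← Finset.coe_insert, Finset.insert_erase hg]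
    _ ≤ _ := sup_le ?_ le_sup_right
  rw [Submodule.span_singleton_le_iff_mem,
    ← Submodule.smul_mem_iff_of_isUnit _ (IsLocalRing.notMem_maximalIdeal.mp hcg), hsmul]
  exact sub_mem (Submodule.mem_sup_left <| add_mem (Submodule.mem_sup_left (neg_mem hk)) <|
    Submodule.mem_sup_right (Submodule.mem_span_singleton_self _)) (Submodule.mem_sup_right hrest)

section Rees

open IsLocalRing RingTheory.Sequence

theorem isWeaklyRegular_cons_iff_isSMulRegular_quotient [IsLocalRing A] [IsNoetherian A M]
    {a : A} {L : List A} (hmem : ∀ x ∈ a :: L, x ∈ maximalIdeal A) :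
    IsWeaklyRegular M (a :: L) ↔
      IsWeaklyRegular M L ∧ IsSMulRegular (M ⧸ (Ideal.ofList L • ⊤ : Submodule A M)) a := by
  have hperm : (a :: L).Perm (L ++ [a]) := (List.perm_append_singleton a L).symm
  rw [← isWeaklyRegular_singleton_iff, ← isWeaklyRegular_append_iff]
  exact ⟨fun h ↦ isWeaklyRegular_of_perm_of_subset_maximalIdeal h hperm hmem,
    fun h ↦ isWeaklyRegular_of_perm_of_subset_maximalIdeal h hperm.symm
      fun x hx ↦ hmem x (hperm.mem_iff.mpr hx)⟩

theorem annihilator_sup_span_le_annihilator_quotSMulTop (z : A) :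
    Module.annihilator A M ⊔ Ideal.span {z} ≤ Module.annihilator A (QuotSMulTop z M) :=
  sup_le (LinearMap.annihilator_le_of_surjective _ (Submodule.mkQ_surjective _))
    ((Ideal.span_singleton_le_iff_mem _).mpr (QuotSMulTop.mem_annihilator M z))

/-- Killing `z ∈ I` first does not change `M ⧸ IM`. -/
def quotSMulTopQuotientEquiv {I : Ideal A} {z : A} (hz : z ∈ I) :
    (QuotSMulTop z M ⧸ (I • ⊤ : Submodule A (QuotSMulTop z M))) ≃ₗ[A]
      M ⧸ (I • ⊤ : Submodule A M) :=
  Submodule.quotEquivOfEq _ _ (by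
    rw [Submodule.map_smul'', Submodule.map_top, Submodule.range_mkQ]) ≪≫ₗ
  Submodule.quotientQuotientEquivQuotient (z • ⊤) (I • ⊤) (by
    rw [← Submodule.ideal_span_singleton_smul]
    exact Submodule.smul_mono_left ((Ideal.span_singleton_le_iff_mem _).mpr hz))

/-- If `I` kills `M`, then `Hom(A ⧸ I, M)` and `M ⧸ IM` are both `M`. -/
def linearMapQuotientEquivQuotientSMulTop {I : Ideal A} (hI : I ≤ Module.annihilator A M) :
    (A ⧸ I →ₗ[A] M) ≃ₗ[A] M ⧸ (I • ⊤ : Submodule A M) :=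
  linearMapQuotientEquivTorsionBySet I M ≪≫ₗ .ofTop _ (by
    refine eq_top_iff.mpr <| (Submodule.torsion_gc A M _ _).mp ?_
    rwa [Submodule.annihilator_top]) ≪≫ₗ
  (Submodule.quotEquivOfEqBot _ (Submodule.le_annihilator_iff.mp (by
    rwa [Submodule.annihilator_top]))).symm

variable [IsNoetherianRing A] [IsLocalRing A]

theorem exists_isSMulRegular_le_annihilator_sup_span_erase [DecidableEq A] [Nontrivial M]
    [Module.Finite A Q] {I : Ideal A} {a : A} (ha : a ∈ I) (haM : IsSMulRegular M a)
    (haQ : IsSMulRegular Q a) {S : Finset A} (hSI : ↑S ⊆ (I : Set A))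
    (hS : I ≤ Module.annihilator A M ⊔ Ideal.span S) :
    ∃ z ∈ I, IsSMulRegular Q z ∧ ∃ g ∈ S,
      I ≤ Module.annihilator A (QuotSMulTop z M) ⊔ Ideal.span (S.erase g) := by
  have hIM : ¬ I ≤ Module.annihilator A M := fun h ↦ by
    obtain ⟨x, hx⟩ := exists_ne (0 : M)
    exact hx (haM.right_eq_zero_of_smul (Module.mem_annihilator.mp (h ha) x))
  have hnot : ¬ I ≤ Module.annihilator A M ⊔ maximalIdeal A • Ideal.span S := fun h ↦
    hIM <| Submodule.le_of_le_smul_of_le_jacobson_bot (IsNoetherian.noetherian I)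
      (maximalIdeal_le_jacobson _) <| h.trans <|
      sup_le_sup_left (Submodule.smul_mono le_rfl (Ideal.span_le.mpr hSI)) _
  obtain ⟨z, hz, hzQ, hz'⟩ := exists_isSMulRegular_notMem ha haQ hnot
  obtain ⟨g, hg, hgS⟩ := exists_span_le_sup_span_erase (hS hz) hz'
  have hsup := annihilator_sup_span_le_annihilator_quotSMulTop (M := M) z
  exact ⟨z, hz, hzQ, g, hg, hS.trans <| sup_le ((le_sup_left.trans hsup).trans le_sup_left) <|
    hgS.trans (sup_le_sup_right hsup _)⟩

theorem nonempty_linearMap_quotient_ofList_equiv [Module.Finite A M] {I : Ideal A}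
    (hI : I ≤ maximalIdeal A) {L : List A} (hLI : ∀ x ∈ L, x ∈ I) (hL : IsWeaklyRegular M L)
    {S : Finset A} (hSI : ↑S ⊆ (I : Set A)) (hS : I ≤ Module.annihilator A M ⊔ Ideal.span S)
    (hcard : S.card ≤ L.length) :
    Nonempty ((A ⧸ I →ₗ[A] M ⧸ (Ideal.ofList L • ⊤ : Submodule A M)) ≃ₗ[A]
      M ⧸ (I • ⊤ : Submodule A M)) := by
  classical
  induction L generalizing M S with
  | nil =>
    obtain rfl : S = ∅ := by simpa using hcard
    exact ⟨.congrRight (Submodule.quotEquivOfEqBot _ (by simp)) ≪≫ₗ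
      linearMapQuotientEquivQuotientSMulTop (by simpa using hS)⟩
  | cons a L ih =>
    cases subsingleton_or_nontrivial M
    · exact ⟨0⟩
    have haI : a ∈ I := hLI a List.mem_cons_self
    have hLI' : ∀ x ∈ L, x ∈ I := fun x hx ↦ hLI x (List.mem_cons_of_mem _ hx)
    obtain ⟨hL', haL⟩ :=
      (isWeaklyRegular_cons_iff_isSMulRegular_quotient fun x hx ↦ hI (hLI x hx)).mp hL
    obtain ⟨z, hzI, hzL, g, hg, hSg⟩ := exists_isSMulRegular_le_annihilator_sup_span_erase haI
      ((isWeaklyRegular_cons_iff M a L).mp hL).1 haL hSI hS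
    have hzreg : IsWeaklyRegular M (z :: L) :=
      (isWeaklyRegular_cons_iff_isSMulRegular_quotient <|
        List.forall_mem_cons.mpr ⟨hI hzI, fun x hx ↦ hI (hLI' x hx)⟩).mpr ⟨hL', hzL⟩
    obtain ⟨e⟩ := ih hLI' ((isWeaklyRegular_cons_iff M z L).mp hzreg).2
      (subset_trans (Finset.coe_subset.mpr (Finset.erase_subset g S)) hSI) hSg
      (by rw [Finset.card_erase_of_mem hg]; exact Nat.sub_le_of_le_add hcard)
    have torsion {x : A} (hx : x ∈ I) : Module.IsTorsionBy A (A ⧸ I) x :=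
      (Module.isTorsionBy_quotient_iff I x).mpr fun y ↦ I.mul_mem_right y hx
    exact ⟨.congrRight (Submodule.quotOfListConsSMulTopEquivQuotSMulTopOuter M a L) ≪≫ₗ
      linearMapQuotSMulTopEquiv haL hzL (torsion haI) (torsion hzI) ≪≫ₗ
      .congrRight ((Submodule.quotOfListConsSMulTopEquivQuotSMulTopOuter M z L).symm ≪≫ₗ
        Submodule.quotOfListConsSMulTopEquivQuotSMulTopInner M z L) ≪≫ₗ
      e ≪≫ₗ quotSMulTopQuotientEquiv hzI⟩

end Rees

end Exchange

section Localization

variable {R : Type*} [CommRing R]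

theorem map_algebraMap_colon (M : Submonoid R) (A : Type*)
    [CommRing A] [Algebra R A] [IsLocalization M A] {I : Ideal R} (hI : I.FG) (J : Ideal R) :
    (J.colon (I : Set R)).map (algebraMap R A) =
      (J.map (algebraMap R A)).colon (I.map (algebraMap R A) : Set A) := by
  obtain ⟨T, rfl : Ideal.span (T : Set R) = I⟩ := hI
  rw [Ideal.colon_span, Ideal.map_span, Ideal.colon_span]
  apply le_antisymm
  · refine Ideal.map_le_iff_le_comap.mpr fun a ha ↦ Submodule.mem_colon.mpr ?_
    rintro _ ⟨t, ht, rfl⟩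
    rw [smul_eq_mul, ← map_mul]
    exact Ideal.mem_map_of_mem _ (Submodule.mem_colon.mp ha t ht)
  · intro x hx
    obtain ⟨⟨a, s⟩, hs⟩ := IsLocalization.surj M x
    have hclear (t : R) (ht : t ∈ T) : ∃ u ∈ M, u * (a * t) ∈ J := by
      rw [← IsLocalization.algebraMap_mem_map_algebraMap_iff M A, map_mul, ← hs, mul_right_comm]
      exact Ideal.mul_mem_right _ _ (Submodule.mem_colon.mp hx _ (Set.mem_image_of_mem _ ht))
    choose! u huM hu using hclear
    have hprod : (∏ t ∈ T, u t) * a ∈ J.colon (T : Set R) := Submodule.mem_colon.mpr fun t ht ↦ by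
      rw [smul_eq_mul, mul_assoc]
      exact J.mem_of_dvd (mul_dvd_mul_right (Finset.dvd_prod_of_mem u ht) _) (hu t ht)
    have hunit : IsUnit (algebraMap R A ((∏ t ∈ T, u t) * s)) :=
      IsLocalization.map_units A (⟨_, M.mul_mem (M.prod_mem huM) s.2⟩ : M)
    rw [← Ideal.unit_mul_mem_iff_mem _ hunit, map_mul, mul_assoc, mul_comm _ x, hs, ← map_mul]
    exact Ideal.mem_map_of_mem _ hprod

theorem le_of_map_le_map_of_mem_associatedPrimes [IsNoetherianRing R]
    {I K : Ideal R} (h : ∀ (P : Ideal R) (_ : P.IsPrime), P ∈ associatedPrimes R (R ⧸ I) →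
      K.map (algebraMap R (Localization.AtPrime P)) ≤
        I.map (algebraMap R (Localization.AtPrime P))) : K ≤ I := by
  intro f hf
  by_contra hfI
  obtain ⟨P, hP, hle⟩ := exists_le_isAssociatedPrime_of_isNoetherianRing R
    (Submodule.Quotient.mk f : R ⧸ I) (by rwa [ne_eq, Submodule.Quotient.mk_eq_zero])
  have := hP.isPrime
  obtain ⟨u, hu, huf⟩ := (IsLocalization.algebraMap_mem_map_algebraMap_iff P.primeCompl
    (Localization.AtPrime P) I f).mp (h P this hP (Ideal.mem_map_of_mem _ hf))
  refine hu (hle ?_)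
  rwa [Submodule.mem_colon_singleton, ← Submodule.Quotient.mk_smul, Submodule.mem_bot,
    Submodule.Quotient.mk_eq_zero]

end Localization

section Linkage

open IsLocalRing RingTheory.Sequence

variable {A : Type*} [CommRing A] {L : List A}

theorem ofList_ne_top_of_isRegular (hL : IsRegular A L) :
    Ideal.ofList L ≠ ⊤ := fun h ↦ hL.top_ne_smul (by rw [h, Submodule.top_smul])

theorem length_linearMap_quotient_ofList_le_one [IsRegularLocalRing A]
    (hL : IsRegular A L) (hdim : ringKrullDim A = L.length) (m : Ideal A)
    (hm : m.IsMaximal) : Module.length A (A ⧸ m →ₗ[A] A ⧸ Ideal.ofList L) ≤ 1 := by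
  obtain rfl := eq_maximalIdeal hm
  have hfg : Submodule.FG (maximalIdeal A) := IsNoetherian.noetherian _
  have hcard : hfg.finite_generators.toFinset.card = L.length := by
    rw [← Set.ncard_eq_toFinset_card _ hfg.finite_generators, hfg.generators_ncard]
    exact_mod_cast IsRegularLocalRing.spanFinrank_maximalIdeal.trans hdim
  have hspan : Ideal.span (hfg.finite_generators.toFinset : Set A) = maximalIdeal A := by
    rw [Set.Finite.coe_toFinset]
    exact Submodule.span_generators (maximalIdeal A)
  have hmem : ∀ x ∈ L, x ∈ maximalIdeal A := fun x hx ↦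
    le_maximalIdeal (ofList_ne_top_of_isRegular hL) (Ideal.subset_span hx)
  obtain ⟨e⟩ := nonempty_linearMap_quotient_ofList_equiv le_rfl hmem hL.toIsWeaklyRegular
    (Ideal.subset_span.trans hspan.le) (hspan.ge.trans le_sup_right) hcard.le
  rw [smul_eq_mul, Ideal.mul_top, smul_eq_mul, Ideal.mul_top] at e
  rw [e.length_eq, Module.length_eq_one_iff.mpr]
  exact isSimpleModule_iff_quot_maximal.mpr ⟨_, hm, ⟨.refl _ _⟩⟩

theorem isFiniteLength_quotient_ofList [IsNoetherianRing A] [IsLocalRing A]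
    (hL : IsRegular A L) (hdim : ringKrullDim A = L.length) :
    IsFiniteLength A (A ⧸ Ideal.ofList L) := by
  have hdim₀ : ringKrullDim (A ⧸ Ideal.ofList L) = 0 := by
    rw [← ENat.WithBot.add_natCast_cancel (c := L.length), zero_add]
    exact (ringKrullDim_add_length_eq_ringKrullDim_of_isRegular L hL).trans hdim
  have : Nontrivial (A ⧸ Ideal.ofList L) :=
    Ideal.Quotient.nontrivial_iff.mpr (ofList_ne_top_of_isRegular hL)
  have : IsArtinianRing (A ⧸ Ideal.ofList L) :=
    isArtinianRing_iff_krullDimLE_zero.mpr (ringKrullDimZero_iff_ringKrullDim_eq_zero.mpr hdim₀)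
  exact isFiniteLength_iff_isNoetherian_isArtinian.mpr ⟨inferInstance,
    isArtinian_of_surjective_algebraMap (R := A ⧸ Ideal.ofList L) Ideal.Quotient.mk_surjective⟩

theorem colon_colon_eq_of_isRegularLocalRing [IsRegularLocalRing A]
    (hL : IsRegular A L) (hdim : ringKrullDim A = L.length) {I : Ideal A}
    (hLI : Ideal.ofList L ≤ I) :
    (Ideal.ofList L).colon ((Ideal.ofList L).colon (I : Set A) : Set A) = I :=
  colon_colon_eq_of_length_linearMap_le_one hLI (length_linearMap_quotient_ofList_le_one hL hdim)
    ((isFiniteLength_quotient_ofList hL hdim).of_injective (Submodule.subtype_injective _))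

theorem double_linkage_general {R : Type*} [CommRing R] [IsRegularRing R] {L : List R}
    (hL : IsWeaklyRegular R L) {I : Ideal R} (hLI : Ideal.ofList L ≤ I)
    (hI : ∀ P ∈ associatedPrimes R (R ⧸ I), P.height = L.length) :
    (Ideal.ofList L).colon ((Ideal.ofList L).colon (I : Set R) : Set R) = I := by
  refine le_antisymm (le_of_map_le_map_of_mem_associatedPrimes fun P hprime hP ↦ ?_)
    fun f hf ↦ Submodule.mem_colon.mpr fun a ha ↦ ?_
  · have hIP : I ≤ P := by
      rw [← Ideal.annihilator_quotient (I := I), ← Submodule.annihilator_top]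
      exact hP.annihilator_le
    have hregular := hL.isRegular_of_isLocalization_of_mem (Localization.AtPrime P) P
      fun x hx ↦ hIP (hLI (Ideal.subset_span hx))
    rw [map_algebraMap_colon P.primeCompl _ (IsNoetherian.noetherian _),
      map_algebraMap_colon P.primeCompl _ (IsNoetherian.noetherian _), Ideal.map_ofList]
    refine (colon_colon_eq_of_isRegularLocalRing hregular ?_ ?_).le
    · rw [IsLocalization.AtPrime.ringKrullDim_eq_height P, hI P hP, List.length_map]
      rfl
    · rw [← Ideal.map_ofList]
      exact Ideal.map_mono hLI
  · rw [smul_eq_mul, mul_comm]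
    exact Submodule.mem_colon.mp ha f hf

end Linkage

set_option synthInstance.maxHeartbeats 400000 in
/-- double linkage: let `I ⊂ R = k[z₀,…,z_n]` be a saturated unmixed
homogeneous ideal and `J ⊆ I` be generated by a regular sequence of homogeneous
elements with `ht J = ht I`.  Height equality and unmixedness are expressed by:
`J` is generated by a regular sequence of length `c`, and every associated prime `P`
of `R/I` has height `c` (height of a prime being the Krull dimension of the
localization at `P`).  Then `(J : (J : I)) = I`. -/
theorem double_linkage (k : Type*) [Field k] (n : ℕ)
    (I J : Ideal (MvPolynomial (Fin (n + 1)) k)) (c : ℕ)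
    (hhom : ∃ S : Set (MvPolynomial (Fin (n + 1)) k),
      (∀ s ∈ S, ∃ d, s.IsHomogeneous d) ∧ I = Ideal.span S)
    (hsat : ∀ f, (∃ N : ℕ,
        ∀ g ∈ (Ideal.span (Set.range X) : Ideal (MvPolynomial (Fin (n + 1)) k)) ^ N,
          g * f ∈ I) → f ∈ I)
    (hJI : J ≤ I)
    (hreg : ∃ L : List (MvPolynomial (Fin (n + 1)) k),
      L.length = c ∧ (∀ x ∈ L, ∃ d, x.IsHomogeneous d ∧ 0 < d) ∧
      RingTheory.Sequence.IsRegular (MvPolynomial (Fin (n + 1)) k) L ∧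
      J = Ideal.span {x | x ∈ L})
    (hunmixed : ∀ P : Ideal (MvPolynomial (Fin (n + 1)) k),
      ∀ hP : IsAssociatedPrime P
        (MvPolynomial (Fin (n + 1)) k ⧸ (I : Ideal (MvPolynomial (Fin (n + 1)) k))),
      ringKrullDim (Localization (@Ideal.primeCompl _ _ P hP.1)) = (c : WithBot ℕ∞)) :
    Submodule.colon J (Submodule.colon J I) = I := by
  obtain ⟨L, rfl, -, hL, rfl⟩ := hreg
  refine double_linkage_general hL.toIsWeaklyRegular hJI fun P hP ↦ ?_
  have := hP.isPrime
  exact_mod_cast (IsLocalization.AtPrime.ringKrullDim_eq_height P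
    (Localization.AtPrime P)).symm.trans (hunmixed P hP)
end
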